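/- arXiv:1804.06104 — 9 statements merged into one kernel-verified Lean document; each statement's English description precedes it below -/
import Mathlib

section
/- There exist a real number ε with 0 < ε < 1/2 and an integer Δ₀ such that the following holds for every integer Δ ≥ Δ₀ and every finite simple graph G with maximum degree Δ and no isolated edge. Set d := ⌈(1/2 − ε)Δ⌉, and call a vertex big if its degree in G is at least d and small otherwise. Then G has a proper edge colouring c using at most Δ + 19 colours such that: (i) S_c(u) ≠ S_c(v) for every edge uv whose endpoints are both big; and (ii) S_c(u) ≠ S_c(v) for every edge uv whose endpoints are both small and such that every vertex of (N(u) ∪ N(v)) − {u, v} is big. -/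
/-- A proper edge colouring: distinct incident edges of `G` get distinct colours. -/
def ProperEdgeColoring {V : Type*} (G : SimpleGraph V) (c : Sym2 V → ℕ) : Prop :=
  ∀ e₁ ∈ G.edgeSet, ∀ e₂ ∈ G.edgeSet, e₁ ≠ e₂ → (∃ v, v ∈ e₁ ∧ v ∈ e₂) → c e₁ ≠ c e₂

/-- `colorSet G c u` is the set of colours appearing on edges incident to `u`. -/
def colorSet {V : Type*} (G : SimpleGraph V) (c : Sym2 V → ℕ) (u : V) : Set ℕ :=
  {n | ∃ v, G.Adj u v ∧ c s(u, v) = n}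

namespace AVD
open Finset

lemma cyc_f {V : Type*} (f g : Equiv.Perm V) (hf : ∀ x, f (f x) = x) (hg : ∀ x, g (g x) = x)
    (u : V) (hu : f u = u) (n : ℤ) : f (((f * g) ^ n) u) = ((f * g) ^ (-n)) u := by
  have hfi : f⁻¹ = f := by
    ext x; rw [Equiv.Perm.inv_eq_iff_eq]; exact (hf x).symm
  have hgi : g⁻¹ = g := by
    ext x; rw [Equiv.Perm.inv_eq_iff_eq]; exact (hg x).symm
  have h1 : f * (f * g) * f⁻¹ = (f * g)⁻¹ := by
    rw [mul_inv_rev, hfi, hgi]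
    ext x; simp [hf]
  have h2 := conj_zpow (i := n) (a := f) (b := f * g)
  rw [h1] at h2
  rw [zpow_neg, ← inv_zpow, h2]
  simp only [Equiv.Perm.mul_apply, hfi, hu]

lemma cyc_two {V : Type*} (f g : Equiv.Perm V) (hf : ∀ x, f (f x) = x) (hg : ∀ x, g (g x) = x)
    (u : V) (hu : f u = u) (x y : V) (hx : (f * g).SameCycle u x) (hy : (f * g).SameCycle u y)
    (hfx : f x = x) (hfy : f y = y) (hxu : x ≠ u) (hyu : y ≠ u) : x = y := by
  obtain ⟨a, rfl⟩ := hx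
  obtain ⟨b, rfl⟩ := hy
  rw [cyc_f f g hf hg u hu] at hfx hfy
  set t := f * g with ht
  let H : AddSubgroup ℤ :=
    { carrier := {n | (t ^ n) u = u}
      zero_mem' := by simp
      add_mem' := by
        intro m n hm hn
        simp only [Set.mem_ofPred_eq] at *
        rw [zpow_add, Equiv.Perm.mul_apply, hn, hm]
      neg_mem' := by
        intro m hm
        simp only [Set.mem_ofPred_eq] at *
        rw [zpow_neg, Equiv.Perm.inv_eq_iff_eq, hm] }
  have key : ∀ n : ℤ, (t ^ n) u = u ↔ n ∈ H := fun n => Iff.rfl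
  have dbl : ∀ n : ℤ, (t ^ (-n)) u = (t ^ n) u → 2 * n ∈ H := by
    intro n hn
    rw [← key, two_mul, zpow_add, Equiv.Perm.mul_apply, ← hn, ← Equiv.Perm.mul_apply, ← zpow_add]
    simp
  have h1 := dbl a hfx
  have h2 := dbl b hfy
  rw [Ne, key] at hxu hyu
  obtain ⟨p, hp⟩ := Int.subgroup_cyclic H
  have mem : ∀ n : ℤ, n ∈ H ↔ p ∣ n := by
    intro n
    rw [hp, AddSubgroup.mem_closure_singleton]
    constructor
    · rintro ⟨k, rfl⟩; exact ⟨k, by simp [mul_comm]⟩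
    · rintro ⟨k, rfl⟩; exact ⟨k, by simp [mul_comm]⟩
  rw [mem] at h1 h2 hxu hyu
  have h3 : a - b ∈ H := by
    rw [mem]
    obtain ⟨r, hr⟩ := h1
    obtain ⟨q, hq⟩ := h2
    have hr1 : r % 2 = 1 := by
      by_contra hne
      apply hxu
      refine ⟨r / 2, ?_⟩
      have : r = 2 * (r / 2) := by omega
      rw [this] at hr
      linarith
    have hq1 : q % 2 = 1 := by
      by_contra hne
      apply hyu
      refine ⟨q / 2, ?_⟩
      have : q = 2 * (q / 2) := by omega
      rw [this] at hq
      linarith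
    refine ⟨(r - q) / 2, ?_⟩
    have : r - q = 2 * ((r - q) / 2) := by omega
    have h5 : 2 * (a - b) = p * (r - q) := by linarith
    rw [this] at h5
    linarith
  rw [← key] at h3
  have : (t ^ a) u = (t ^ (b + (a - b))) u := by congr 2; ring
  rw [this, zpow_add, Equiv.Perm.mul_apply, h3]

/-- An orbit. -/
lemma orbit_exists {V : Type*} (f g : V → V) (hf : Function.Involutive f)
    (hg : Function.Involutive g) (u : V) (hu : f u = u) :
    ∃ C : Set V, u ∈ C ∧ (∀ x ∈ C, f x ∈ C) ∧ (∀ x ∈ C, g x ∈ C) ∧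
      ∀ x ∈ C, ∀ y ∈ C, f x = x → f y = y → x ≠ u → y ≠ u → x = y := by
  let f' := hf.toPerm
  let g' := hg.toPerm
  have hf' : ∀ x, f' (f' x) = x := hf
  have hg' : ∀ x, g' (g' x) = x := hg
  have cf : ∀ x, (f' * g').SameCycle u x → (f' * g').SameCycle u (f' x) := by
    rintro x ⟨n, rfl⟩
    rw [cyc_f f' g' hf' hg' u hu]
    exact ⟨-n, rfl⟩
  refine ⟨{x | (f' * g').SameCycle u x}, Equiv.Perm.SameCycle.refl _ _, cf, ?_, ?_⟩
  · intro x hx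
    have h1 : (f' * g').SameCycle u ((f' * g') x) := by
      obtain ⟨n, rfl⟩ := hx
      exact ⟨1 + n, by rw [zpow_add, zpow_one, Equiv.Perm.mul_apply]⟩
    have h2 := cf _ h1
    rw [Equiv.Perm.mul_apply, hf'] at h2
    exact h2
  · intro x hx y hy h1 h2 h3 h4
    exact cyc_two f' g' hf' hg' u hu x y hx hy h1 h2 h3 h4

lemma sum_card_comm {V κ : Type*} [Fintype V] [DecidableEq V] (K : Finset κ)
    (X : κ → Finset V) : ∑ c ∈ K, #(X c) = ∑ x : V, #{c ∈ K | x ∈ X c} := by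
  simp_rw [Finset.card_eq_sum_ones, Finset.sum_filter]
  rw [Finset.sum_comm]
  refine Finset.sum_congr rfl fun c _ => ?_
  rw [← Finset.sum_filter]
  simp

lemma kempe {V κ : Type*} [Fintype V] [DecidableEq V] [DecidableEq κ] (K : Finset κ) (N : ℕ) :
    ∀ (s : κ → V → V) (_ : ∀ c ∈ K, Function.Involutive (s c)) (X : κ → Finset V)
    (_ : ∀ c ∈ K, ∀ x ∈ X c, s c x = x) (_ : Odd (∑ c ∈ K, #(X c)))
    (_ : ∑ c ∈ K, #(X c) < 2 * #K) (_ : #{c ∈ K | X c = ∅} ≤ N),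
    ∃ (s' : κ → V → V) (X' : κ → Finset V), (∀ c ∈ K, Function.Involutive (s' c)) ∧
      (∀ c ∈ K, ∀ x ∈ X' c, s' c x = x) ∧
      (∀ x y, #{c ∈ K | s' c x = y} = #{c ∈ K | s c x = y}) ∧
      (∀ x, #{c ∈ K | x ∈ X' c} = #{c ∈ K | x ∈ X c}) ∧ ∃ c ∈ K, #(X' c) = 1 := by
  classical
  induction N using Nat.strong_induction_on with
  | _ N ih =>
  intro s hs X hX hodd hlt hN
  by_cases hone : ∃ c ∈ K, #(X c) = 1
  · exact ⟨s, X, hs, hX, fun _ _ => rfl, fun _ => rfl, hone⟩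
  push Not at hone
  obtain ⟨j, hj, hj0⟩ : ∃ j ∈ K, #(X j) = 0 := by
    by_contra hcon
    push Not at hcon
    have : ∑ c ∈ K, 2 ≤ ∑ c ∈ K, #(X c) := by
      refine Finset.sum_le_sum fun c hc => ?_
      have := hone c hc
      have := hcon c hc
      omega
    simp at this
    omega
  obtain ⟨i, hi, hi3⟩ : ∃ i ∈ K, 3 ≤ #(X i) := by
    by_contra hcon
    push Not at hcon
    have : Even (∑ c ∈ K, #(X c)) := by
      rw [even_iff_two_dvd]
      refine Finset.dvd_sum fun c hc => ?_
      have := hone c hc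
      have := hcon c hc
      have h : #(X c) = 0 ∨ #(X c) = 2 := by omega
      rcases h with h | h <;> rw [h] <;> norm_num
    exact (Nat.not_even_iff_odd.2 hodd) this
  have hij : i ≠ j := by rintro rfl; omega
  obtain ⟨u, hu⟩ : (X i).Nonempty := Finset.card_pos.1 (by omega)
  obtain ⟨C, huC, hCi, hCj, hC2⟩ := orbit_exists (s i) (s j) (hs i hi) (hs j hj) u (hX i hi u hu)
  have hXj : X j = ∅ := Finset.card_eq_zero.1 hj0
  let sw := Equiv.swap i j
  let s' : κ → V → V := fun c x => if x ∈ C then s (sw c) x else s c x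
  let X' : κ → Finset V := fun c => {x | if x ∈ C then x ∈ X (sw c) else x ∈ X c}
  have hswK : ∀ c, sw c ∈ K ↔ c ∈ K := by
    intro c
    simp only [sw, Equiv.swap_apply_def]
    split_ifs with h1 h2 <;> simp_all
  have cnt : ∀ (P : κ → Prop), #{c ∈ K | P (sw c)} = #{c ∈ K | P c} := by
    intro P
    refine Finset.card_bij (fun c _ => sw c) ?_ ?_ ?_
    · intro a ha; simp only [Finset.mem_filter] at ha ⊢; exact ⟨(hswK a).2 ha.1, ha.2⟩
    · intro a _ b _ h; exact sw.injective h
    · intro b hb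
      simp only [Finset.mem_filter] at hb
      refine ⟨sw b, ?_, by simp [sw]⟩
      simp only [Finset.mem_filter, hswK]
      refine ⟨hb.1, ?_⟩
      have : sw (sw b) = b := by simp [sw]
      rw [this]; exact hb.2
  have h1 : ∀ c ∈ K, Function.Involutive (s' c) := by
    intro c hc
    by_cases hci : c = i
    · subst hci
      intro x
      by_cases hx : x ∈ C
      · have := hCj x hx
        simp only [s', sw, Equiv.swap_apply_left, hx, this, if_true]
        exact hs j hj x
      · have : s c x ∉ C := fun h => hx (by simpa [hs c hc x] using hCi _ h)
        simp only [s', hx, this, if_false]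
        exact hs c hc x
    · by_cases hcj : c = j
      · subst hcj
        intro x
        by_cases hx : x ∈ C
        · have := hCi x hx
          simp only [s', sw, Equiv.swap_apply_right, hx, this, if_true]
          exact hs i hi x
        · have : s c x ∉ C := fun h => hx (by simpa [hs c hc x] using hCj _ h)
          simp only [s', hx, this, if_false]
          exact hs c hc x
      · have : s' c = s c := by
          funext x
          simp [s', sw, Equiv.swap_apply_of_ne_of_ne hci hcj]
        rw [this]; exact hs c hc
  have h2 : ∀ c ∈ K, ∀ x ∈ X' c, s' c x = x := by
    intro c hc x hx
    simp only [X', Finset.mem_filter, Finset.mem_univ, true_and] at hx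
    by_cases hxC : x ∈ C
    · simp only [hxC, if_true, s'] at hx ⊢
      exact hX _ ((hswK c).2 hc) x hx
    · simp only [hxC, if_false, s'] at hx ⊢
      exact hX _ hc x hx
  have h3 : ∀ x y, #{c ∈ K | s' c x = y} = #{c ∈ K | s c x = y} := by
    intro x y
    by_cases hxC : x ∈ C
    · simp only [hxC, if_true, s']
      convert cnt (fun c => s c x = y)
    · simp only [hxC, if_false, s']
  have h4 : ∀ x, #{c ∈ K | x ∈ X' c} = #{c ∈ K | x ∈ X c} := by
    intro x
    by_cases hxC : x ∈ C
    · simp only [hxC, if_true, X', Finset.mem_filter, Finset.mem_univ, true_and]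
      convert cnt (fun c => x ∈ X c)
    · simp only [hxC, if_false, X', Finset.mem_filter, Finset.mem_univ, true_and]
  have hsum : ∑ c ∈ K, #(X' c) = ∑ c ∈ K, #(X c) := by
    rw [sum_card_comm K X', sum_card_comm K X]
    exact Finset.sum_congr rfl fun x _ => h4 x
  have hX'j : X' j = (X i).filter (· ∈ C) := by
    ext x
    by_cases hxC : x ∈ C <;> simp [X', sw, hxC, hXj]
  have hX'i : X' i = (X i).filter (· ∉ C) := by
    ext x
    by_cases hxC : x ∈ C <;> simp [X', sw, hxC, hXj]
  have huX' : u ∈ X' j := by rw [hX'j]; simp [hu, huC]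
  have hle2 : #(X' j) ≤ 2 := by
    have : #((X' j).erase u) ≤ 1 := by
      rw [Finset.card_le_one]
      intro x hx y hy
      rw [hX'j] at hx hy
      simp only [Finset.mem_erase, Finset.mem_filter] at hx hy
      exact hC2 x hx.2.2 y hy.2.2 (hX i hi x hx.2.1) (hX i hi y hy.2.1) hx.1 hy.1
    rw [Finset.card_erase_of_mem huX'] at this
    omega
  have hpos : 0 < #(X' i) := by
    have h := Finset.card_filter_add_card_filter_not (s := X i) (· ∈ C)
    rw [← hX'j] at h
    have h' : #(X' i) = #((X i).filter (fun x => ¬ x ∈ C)) := by rw [hX'i]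
    omega
  have hlt' : #{c ∈ K | X' c = ∅} < #{c ∈ K | X c = ∅} := by
    apply Finset.card_lt_card
    rw [Finset.ssubset_iff_of_subset]
    · refine ⟨j, by simp [hj, hXj], ?_⟩
      simp only [Finset.mem_filter, not_and]
      intro _ h
      rw [h] at huX'; simp at huX'
    · intro c hc
      simp only [Finset.mem_filter] at hc ⊢
      refine ⟨hc.1, ?_⟩
      by_cases hci : c = i
      · subst hci; rw [hc.2] at hpos; simp at hpos
      · by_cases hcj : c = j
        · subst hcj; exact hXj
        · have : X' c = X c := by
            ext x
            simp [X', sw, Equiv.swap_apply_of_ne_of_ne hci hcj]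
          rw [← this]; exact hc.2
  obtain ⟨s2, X2, g1, g2, g3, g4, g5⟩ := ih _ (lt_of_lt_of_le hlt' hN) s' h1 X' h2
    (by rw [hsum]; exact hodd) (by rw [hsum]; exact hlt) le_rfl
  exact ⟨s2, X2, g1, g2, fun x y => (g3 x y).trans (h3 x y), fun x => (g4 x).trans (h4 x), g5⟩

end AVD

namespace AVD
open Finset

lemma assign {V κ : Type*} [Fintype V] [DecidableEq V] [DecidableEq κ] (n : ℕ) :
    ∀ (K : Finset κ) (s : κ → V → V) (_ : ∀ c ∈ K, Function.Involutive (s c)) (m : V → ℕ) (u0 : V)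
    (_ : ∑ x, m x = n) (_ : n ≤ #K)
    (_ : ∀ x, 2 * m x ≤ #{c ∈ K | s c x = x} + if x = u0 then 1 else 0),
    ∃ (s' : κ → V → V) (a : κ → Option V), (∀ c ∈ K, Function.Involutive (s' c)) ∧
      (∀ x y, #{c ∈ K | s' c x = y} = #{c ∈ K | s c x = y}) ∧
      (∀ c ∈ K, ∀ u, a c = some u → s' c u = u) ∧ ∀ u, #{c ∈ K | a c = some u} = m u := by
  classical
  induction n with
  | zero =>
    intro K s hs m u0 hm _ _
    refine ⟨s, fun _ => none, hs, fun _ _ => rfl, by simp, ?_⟩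
    intro u
    have : m u = 0 := by
      rw [Finset.sum_eq_zero_iff] at hm
      exact hm u (Finset.mem_univ u)
    simp [this]
  | succ n ih =>
    intro K s hs m u0' hm hK hmiss'
    -- choose an exceptional vertex with positive demand
    obtain ⟨u0, hu0, hmiss⟩ : ∃ u0, 1 ≤ m u0 ∧
        ∀ x, 2 * m x ≤ #{c ∈ K | s c x = x} + if x = u0 then 1 else 0 := by
      by_cases h : 1 ≤ m u0'
      · exact ⟨u0', h, hmiss'⟩
      · obtain ⟨w, hw⟩ : ∃ w, m w ≠ 0 := by
          by_contra hcon
          push Not at hcon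
          simp [hcon] at hm
        refine ⟨w, by omega, fun x => ?_⟩
        have h1 := hmiss' x
        by_cases hx : x = u0'
        · subst hx; have : m x = 0 := by omega
          omega
        · simp only [hx, if_false] at h1; omega
    have hch : ∀ x, ∃ P ⊆ ({c ∈ K | s c x = x} : Finset κ), #P = 2 * m x - if x = u0 then 1 else 0 := by
      intro x
      apply Finset.exists_subset_card_eq
      have := hmiss x
      omega
    choose P hPs hPc using hch
    let X : κ → Finset V := fun c => {x | c ∈ P x}
    have hXP : ∀ x, ({c ∈ K | x ∈ X c} : Finset κ) = P x := by
      intro x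
      ext c
      simp only [X, Finset.mem_filter, Finset.mem_univ, true_and]
      constructor
      · exact fun h => h.2
      · intro h; exact ⟨(Finset.mem_filter.1 (hPs x h)).1, h⟩
    have hXfix : ∀ c ∈ K, ∀ x ∈ X c, s c x = x := by
      intro c _ x hx
      simp only [X, Finset.mem_filter, Finset.mem_univ, true_and] at hx
      exact (Finset.mem_filter.1 (hPs x hx)).2
    have hsum : ∑ c ∈ K, #(X c) + 1 = 2 * (n + 1) := by
      rw [sum_card_comm, ← hm, Finset.mul_sum]
      simp_rw [hXP, hPc]
      rw [← Finset.add_sum_erase _ _ (Finset.mem_univ u0),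
        ← Finset.add_sum_erase _ (fun i => 2 * m i) (Finset.mem_univ u0)]
      have : ∑ x ∈ Finset.univ.erase u0, (2 * m x - if x = u0 then 1 else 0)
          = ∑ x ∈ Finset.univ.erase u0, 2 * m x := by
        refine Finset.sum_congr rfl fun x hx => ?_
        simp [Finset.ne_of_mem_erase hx]
      rw [this]
      simp only [if_true]
      omega
    obtain ⟨s1, X1, g1, g2, g3, g4, c, hc, hc1⟩ := kempe K _ s hs X hXfix
      (by rw [← Nat.not_even_iff_odd]; intro h; obtain ⟨r, hr⟩ := h; omega) (by omega) le_rfl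
    obtain ⟨u, hu⟩ := Finset.card_eq_one.1 hc1
    have hcnt : ∀ x, #{c ∈ K | x ∈ X1 c} = 2 * m x - if x = u0 then 1 else 0 := by
      intro x; rw [g4, hXP, hPc]
    have hmu : 1 ≤ m u := by
      have h1 := hcnt u
      have h2 : 0 < #{c ∈ K | u ∈ X1 c} := Finset.card_pos.2 ⟨c, by simp [hc, hu]⟩
      omega
    have herase : ∀ (Q : κ → Prop) [DecidablePred Q], #{d ∈ K | Q d}
        = #{d ∈ K.erase c | Q d} + if Q c then 1 else 0 := by
      intro Q _
      rw [← Finset.insert_erase hc, Finset.filter_insert]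
      split_ifs with h
      · rw [Finset.card_insert_of_notMem (by simp)]; simp
      · simp
    let m' : V → ℕ := fun x => m x - if x = u then 1 else 0
    obtain ⟨s2, a, k1, k2, k3, k4⟩ := ih (K.erase c) s1 (fun d hd => g1 d (Finset.mem_of_mem_erase hd))
      m' u0 (by
        rw [← Finset.add_sum_erase _ _ (Finset.mem_univ u)] at hm ⊢
        have : ∑ x ∈ Finset.univ.erase u, m' x = ∑ x ∈ Finset.univ.erase u, m x := by
          refine Finset.sum_congr rfl fun x hx => ?_
          simp [m', Finset.ne_of_mem_erase hx]
        rw [this]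
        simp only [m', if_true]
        omega) (by rw [Finset.card_erase_of_mem hc]; omega) (by
        intro x
        have e1 := herase (fun d => x ∈ X1 d)
        rw [hcnt, hu] at e1
        have e2 : #{d ∈ K.erase c | x ∈ X1 d} ≤ #{d ∈ K.erase c | s1 d x = x} := by
          apply Finset.card_le_card
          intro d hd
          simp only [Finset.mem_filter] at hd ⊢
          exact ⟨hd.1, g2 d (Finset.mem_of_mem_erase hd.1) x hd.2⟩
        simp only [m']
        by_cases hx : x = u
        · subst hx
          simp only [Finset.mem_singleton, if_true] at e1 ⊢
          split_ifs at e1 ⊢ <;> omega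
        · simp only [Finset.mem_singleton, hx, if_false] at e1 ⊢
          omega)
    have hup : ∀ d ∈ K.erase c, Function.update s2 c (s1 c) d = s2 d := by
      intro d hd
      rw [Function.update_of_ne (Finset.ne_of_mem_erase hd)]
    refine ⟨Function.update s2 c (s1 c), Function.update a c (some u), ?_, ?_, ?_, ?_⟩
    · intro d hd
      by_cases hdc : d = c
      · subst hdc; simp only [Function.update_self]; exact g1 d hd
      · rw [hup d (Finset.mem_erase.2 ⟨hdc, hd⟩)]; exact k1 d (Finset.mem_erase.2 ⟨hdc, hd⟩)
    · intro x y
      rw [← g3, herase, herase (fun d => s1 d x = y), ← k2]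
      simp only [Function.update_self]
      congr 2
      refine Finset.filter_congr fun d hd => ?_
      rw [hup d hd]
    · intro d hd w
      by_cases hdc : d = c
      · subst hdc
        simp only [Function.update_self, Option.some.injEq]
        rintro rfl
        exact g2 d hd u (by simp [hu])
      · rw [hup d (Finset.mem_erase.2 ⟨hdc, hd⟩), Function.update_of_ne hdc]
        exact k3 d (Finset.mem_erase.2 ⟨hdc, hd⟩) w
    · intro w
      rw [herase]
      have : #{d ∈ K.erase c | Function.update a c (some u) d = some w} =
          #{d ∈ K.erase c | a d = some w} := by
        congr 1
        refine Finset.filter_congr fun d hd => ?_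
        rw [Function.update_of_ne (Finset.ne_of_mem_erase hd)]
      rw [this, k4]
      simp only [Function.update_self, Option.some.injEq, m']
      by_cases hw : w = u
      · subst hw; simp; omega
      · simp [hw, Ne.symm hw]

lemma vizing_aux {V : Type*} [Fintype V] [DecidableEq V] (k : ℕ) (M : V → V → ℕ)
    (hsymm : ∀ x y, M x y = M y x) (hdiag : ∀ x, M x x = 0)
    (hdeg : ∀ x y, ∑ z, M x z + M x y ≤ k) (S : Finset V) :
    ∃ s : ℕ → V → V, (∀ c ∈ range k, Function.Involutive (s c)) ∧
      ∀ x y, x ≠ y → #{c ∈ range k | s c x = y} = if x ∈ S ∧ y ∈ S then M x y else 0 := by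
  classical
  induction S using Finset.induction_on with
  | empty =>
    refine ⟨fun _ x => x, fun _ _ _ => rfl, fun x y hxy => ?_⟩
    simp [hxy]
  | insert v S hv ih =>
    obtain ⟨s, hs, hcnt⟩ := ih
    let m : V → ℕ := fun x => if x ∈ S then M v x else 0
    have hmle : ∀ x, m x ≤ M v x := by intro x; simp only [m]; split_ifs <;> omega
    obtain ⟨s', a, h1, h2, h3, h4⟩ := assign (∑ x, m x) (range k) s hs m v rfl (by
      rw [Finset.card_range]
      have := hdeg v v
      have h2 : ∑ x, m x ≤ ∑ x, M v x := Finset.sum_le_sum fun x _ => hmle x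
      omega) (by
      intro x
      by_cases hx : x ∈ S
      · have e : #(range k) = ∑ y, #{c ∈ range k | s c x = y} :=
          Finset.card_eq_sum_card_fiberwise (fun _ _ => Finset.mem_coe.2 (Finset.mem_univ _))
        rw [Finset.card_range, ← Finset.add_sum_erase _ _ (Finset.mem_univ x)] at e
        have hvx : v ≠ x := by rintro rfl; exact hv hx
        have e2 : ∑ y ∈ univ.erase x, #{c ∈ range k | s c x = y} + M x v ≤ ∑ y, M x y := by
          rw [← Finset.add_sum_erase _ (fun y => M x y) (Finset.mem_univ v)]
          have hvm : v ∈ univ.erase x := by simp [hvx]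
          rw [← Finset.add_sum_erase _ _ hvm, hcnt x v hvx.symm]
          simp only [hv, and_false, if_false, zero_add]
          rw [add_comm]
          apply Nat.add_le_add_left
          refine le_trans (Finset.sum_le_sum (g := fun y => M x y) fun y hy => ?_) ?_
          · simp only [Finset.mem_erase] at hy
            rw [hcnt x y (Ne.symm hy.2.1)]
            split_ifs <;> omega
          · apply Finset.sum_le_sum_of_subset
            intro y hy
            simp only [Finset.mem_erase] at hy ⊢
            exact ⟨hy.1, Finset.mem_univ _⟩
        have e3 := hdeg x v
        have e4 := hsymm v x
        simp only [m, hx, if_true]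
        omega
      · simp [m, hx])
    have hcnt' : ∀ x y, x ≠ y → #{c ∈ range k | s' c x = y} = if x ∈ S ∧ y ∈ S then M x y else 0 := by
      intro x y hxy; rw [h2, hcnt x y hxy]
    have hfixv : ∀ c ∈ range k, s' c v = v := by
      intro c hc
      by_contra hne
      have := hcnt' v (s' c v) (Ne.symm hne)
      simp only [hv, false_and, if_false, Finset.card_eq_zero] at this
      have hmem : c ∈ ({d ∈ range k | s' d v = s' c v} : Finset ℕ) := by
        simp only [Finset.mem_filter, and_true]; exact hc
      rw [this] at hmem; simp at hmem
    have hav : ∀ c ∈ range k, a c ≠ some v := by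
      intro c hc hcv
      have := h4 v
      simp only [m, hv, if_false, Finset.card_eq_zero] at this
      have hmem : c ∈ ({d ∈ range k | a d = some v} : Finset ℕ) := by
        simp only [Finset.mem_filter]; exact ⟨hc, hcv⟩
      rw [this] at hmem; simp at hmem
    let s2 : ℕ → V → V := fun c x => s' c (Equiv.swap v ((a c).getD v) x)
    have hfixu : ∀ c ∈ range k, s' c ((a c).getD v) = (a c).getD v := by
      intro c hc
      cases h : a c with
      | none => simp [hfixv c hc]
      | some u => simp [h3 c hc u h]
    have hs2v : ∀ c ∈ range k, s2 c v = (a c).getD v := by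
      intro c hc; simp only [s2, Equiv.swap_apply_left]; exact hfixu c hc
    have hs2u : ∀ c ∈ range k, s2 c ((a c).getD v) = v := by
      intro c hc; simp only [s2, Equiv.swap_apply_right]; exact hfixv c hc
    have hs2o : ∀ c x, x ≠ v → x ≠ (a c).getD v → s2 c x = s' c x := by
      intro c x h1 h2; simp only [s2, Equiv.swap_apply_of_ne_of_ne h1 h2]
    have hinv : ∀ c ∈ range k, Function.Involutive (s2 c) := by
      intro c hc x
      by_cases hx : x = v
      · rw [hx, hs2v c hc, hs2u c hc]
      · by_cases hxu : x = (a c).getD v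
        · rw [hxu, hs2u c hc, hs2v c hc]
        · rw [hs2o c x hx hxu]
          rw [hs2o c]
          · exact h1 c hc x
          · intro h
            apply hx
            rw [← h1 c hc x, h, hfixv c hc]
          · intro h
            apply hxu
            rw [← h1 c hc x, h, hfixu c hc]
    have hvy : ∀ y, y ≠ v → #{c ∈ range k | s2 c v = y} = if y ∈ S then M v y else 0 := by
      intro y hy
      change _ = m y
      rw [← h4]
      congr 1
      refine Finset.filter_congr fun c hc => ?_
      rw [hs2v c hc]
      cases h : a c with
      | none => simp [hy.symm]
      | some u => simp
    have hsw : ∀ x y, #{c ∈ range k | s2 c x = y} = #{c ∈ range k | s2 c y = x} := by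
      intro x y
      congr 1
      refine Finset.filter_congr fun c hc => ?_
      constructor
      · rintro rfl; exact hinv c hc x
      · rintro rfl; exact hinv c hc y
    refine ⟨s2, hinv, ?_⟩
    intro x y hxy
    by_cases hx : x = v
    · subst hx
      rw [hvy y hxy.symm]
      simp [hxy.symm]
    · by_cases hy : y = v
      · subst hy
        rw [hsw, hvy x hxy, hsymm]
        simp [hxy]
      · have : #{c ∈ range k | s2 c x = y} = #{c ∈ range k | s' c x = y} := by
          congr 1
          refine Finset.filter_congr fun c hc => ?_
          by_cases hxu : x = (a c).getD v
          · rw [hxu, hs2u c hc, hfixu c hc, ← hxu]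
            simp [hxy, Ne.symm hy]
          · rw [hs2o c x hx hxu]
        rw [this, hcnt' x y hxy]
        simp [hx, hy]

/-- Vizing for multigraphs given by multiplicities. -/
lemma vizing {V : Type*} [Fintype V] [DecidableEq V] (k : ℕ) (M : V → V → ℕ)
    (hsymm : ∀ x y, M x y = M y x) (hdiag : ∀ x, M x x = 0)
    (hdeg : ∀ x y, ∑ z, M x z + M x y ≤ k) :
    ∃ s : ℕ → V → V, (∀ c ∈ range k, Function.Involutive (s c)) ∧
      ∀ x y, x ≠ y → #{c ∈ range k | s c x = y} = M x y := by
  obtain ⟨s, h1, h2⟩ := vizing_aux k M hsymm hdiag hdeg univ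
  exact ⟨s, h1, fun x y h => by rw [h2 x y h]; simp⟩

end AVD

namespace AVD
open Finset

/-- Merged Vizing edge colouring. -/
lemma merged {V W : Type*} [Fintype V] [DecidableEq V] [Fintype W] [DecidableEq W]
    (E : Finset (Sym2 V)) (r : V → W) (D μ k : ℕ)
    (hE : ∀ e ∈ E, ¬ (Sym2.map r e).IsDiag)
    (hD : ∀ x, #{e ∈ E | x ∈ Sym2.map r e} ≤ D)
    (hμ : ∀ q, #{e ∈ E | Sym2.map r e = q} ≤ μ) (hk : D + μ ≤ k) :
    ∃ c : Sym2 V → ℕ, (∀ e ∈ E, c e < k) ∧ ∀ e₁ ∈ E, ∀ e₂ ∈ E, e₁ ≠ e₂ →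
      (∃ x, x ∈ Sym2.map r e₁ ∧ x ∈ Sym2.map r e₂) → c e₁ ≠ c e₂ := by
  classical
  let M : W → W → ℕ := fun x y => #{e ∈ E | Sym2.map r e = s(x, y)}
  obtain ⟨s, hs, hM⟩ := vizing k M (by intro x y; simp only [M, Sym2.eq_swap]) (by
      intro x
      simp only [M, Finset.card_eq_zero, Finset.filter_eq_empty_iff]
      intro e he h
      apply hE e he
      rw [h]; simp) (by
      intro x y
      refine le_trans (Nat.add_le_add ?_ (hμ s(x, y))) hk
      refine le_trans ?_ (hD x)
      simp only [M]
      rw [← Finset.card_biUnion]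
      · apply Finset.card_le_card
        intro e he
        simp only [Finset.mem_biUnion, Finset.mem_univ, true_and, Finset.mem_filter] at he ⊢
        obtain ⟨y, h1, h2⟩ := he
        exact ⟨h1, by rw [h2]; simp⟩
      · intro a _ b _ hab
        rw [Function.onFun, Finset.disjoint_filter]
        intro e _ h1 h2
        rw [h1] at h2
        apply hab
        have h3 : a = b ∨ x = b ∧ a = x := by simpa using h2
        rcases h3 with h3 | ⟨h3, h4⟩
        · exact h3
        · rw [h4, h3])
  have hinj : ∀ q : Sym2 W, ∃ φ : Sym2 V → ℕ,
      (∀ e ∈ E, Sym2.map r e = q → φ e < k ∧ ∀ x ∈ q, s(x, s (φ e) x) = q) ∧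
      ∀ e₁ ∈ E, ∀ e₂ ∈ E, Sym2.map r e₁ = q → Sym2.map r e₂ = q → φ e₁ = φ e₂ → e₁ = e₂ := by
    intro q
    induction q using Sym2.ind with
    | _ x y =>
    by_cases hxy : x = y
    · refine ⟨fun _ => 0, ?_, ?_⟩
      · intro e he h
        exact absurd (by rw [h]; simpa using hxy) (hE e he)
      · intro e he _ _ h
        exact absurd (by rw [h]; simpa using hxy) (hE e he)
    · have hc := hM x y hxy
      simp only [M] at hc
      obtain ⟨f⟩ := Fintype.card_eq.1 (show
        Fintype.card {e // e ∈ ({e ∈ E | Sym2.map r e = s(x, y)} : Finset _)} =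
        Fintype.card {c // c ∈ ({c ∈ range k | s c x = y} : Finset _)} by
          rw [Fintype.card_coe, Fintype.card_coe, hc])
      refine ⟨fun e => if h : e ∈ ({e ∈ E | Sym2.map r e = s(x, y)} : Finset _) then f ⟨e, h⟩ else 0,
        ?_, ?_⟩
      · intro e he h
        have hmem : e ∈ ({e ∈ E | Sym2.map r e = s(x, y)} : Finset _) := by simp [he, h]
        simp only [dif_pos hmem]
        have h2 := (f ⟨e, hmem⟩).2
        rw [Finset.mem_filter] at h2
        refine ⟨Finset.mem_range.1 h2.1, ?_⟩
        intro z hz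
        rw [Sym2.mem_iff] at hz
        rcases hz with rfl | rfl
        · rw [h2.2]
        · have := hs _ h2.1 x
          rw [h2.2] at this
          rw [this, Sym2.eq_swap]
      · intro e₁ he₁ e₂ he₂ h1 h2 heq
        have hm1 : e₁ ∈ ({e ∈ E | Sym2.map r e = s(x, y)} : Finset _) := by simp [he₁, h1]
        have hm2 : e₂ ∈ ({e ∈ E | Sym2.map r e = s(x, y)} : Finset _) := by simp [he₂, h2]
        simp only [dif_pos hm1, dif_pos hm2] at heq
        have := f.injective (Subtype.ext heq)
        simpa using this
  choose φ hφ1 hφ2 using hinj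
  refine ⟨fun e => φ (Sym2.map r e) e, ?_, ?_⟩
  · intro e he
    exact (hφ1 _ e he rfl).1
  · rintro e₁ he₁ e₂ he₂ hne ⟨x, hx1, hx2⟩ heq
    simp only at heq
    have a1 := (hφ1 _ e₁ he₁ rfl).2 x hx1
    have a2 := (hφ1 _ e₂ he₂ rfl).2 x hx2
    rw [← heq, a1] at a2
    apply hne
    refine hφ2 _ e₁ he₁ e₂ he₂ rfl a2.symm ?_
    rw [heq, a2]

/-- Rosenfeld-style counting local lemma. -/
lemma rosenfeld {I A : Type*} [Fintype I] [DecidableEq I] [DecidableEq A] [Nonempty A]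
    (T : Finset I) (L : I → Finset A) (B : Finset (Finset (I × A))) (β : ℝ) (hβ : 0 < β)
    (hB : ∀ b ∈ B, b.Nonempty)
    (h : ∀ i ∈ T, β + ∑ b ∈ B with i ∈ b.image Prod.fst, (β ^ (#b - 1))⁻¹ ≤ #(L i)) :
    ∃ σ : I → A, (∀ i ∈ T, σ i ∈ L i) ∧
      ∀ b ∈ B, (∀ p ∈ b, p.1 ∈ T) → ¬ ∀ p ∈ b, σ p.1 = p.2 := by
  classical
  let a0 : A := Classical.arbitrary A
  let ext : Finset I → Finset (I → A) := fun S => Fintype.piFinset fun i => if i ∈ S then L i else {a0}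
  have mext : ∀ S f, f ∈ ext S ↔ (∀ i ∈ S, f i ∈ L i) ∧ ∀ i ∉ S, f i = a0 := by
    intro S f
    simp only [ext, Fintype.mem_piFinset]
    constructor
    · intro h
      refine ⟨fun i hi => ?_, fun i hi => ?_⟩
      · have := h i; rwa [if_pos hi] at this
      · have := h i; rw [if_neg hi] at this; simpa using this
    · rintro ⟨h1, h2⟩ i
      split_ifs with hi
      · exact h1 i hi
      · simp [h2 i hi]
  let good : Finset I → Finset (I → A) := fun S =>
    {f ∈ ext S | ∀ b ∈ B, (∀ p ∈ b, p.1 ∈ S) → ¬ ∀ p ∈ b, f p.1 = p.2}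
  have mgood : ∀ S f, f ∈ good S ↔ f ∈ ext S ∧
      ∀ b ∈ B, (∀ p ∈ b, p.1 ∈ S) → ¬ ∀ p ∈ b, f p.1 = p.2 := by
    intro S f; simp only [good, Finset.mem_filter]
  -- resetting outside S
  let res : Finset I → (I → A) → (I → A) := fun S f i => if i ∈ S then f i else a0
  have hres : ∀ S S' f, S ⊆ S' → f ∈ good S' → res S f ∈ good S := by
    intro S S' f hSS hf
    rw [mgood, mext] at hf ⊢
    refine ⟨⟨fun i hi => ?_, fun i hi => ?_⟩, fun b hb hbS hv => ?_⟩
    · simp only [res, hi, if_true]; exact hf.1.1 i (hSS hi)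
    · simp only [res, hi, if_false]
    · refine hf.2 b hb (fun p hp => hSS (hbS p hp)) fun p hp => ?_
      have := hv p hp
      simpa only [res, hbS p hp, if_true] using this
  have main : ∀ n, ∀ S : Finset I, #S = n → S ⊆ T → ∀ i ∈ T, i ∉ S →
      β * #(good S) ≤ #(good (insert i S)) := by
    intro n
    induction n using Nat.strong_induction_on with
    | _ n ih =>
    intro S hSn hST i hiT hiS
    -- removing a set
    have rem : ∀ U : Finset I, U ⊆ S → (#(good (S \ U)) : ℝ) * β ^ #U ≤ #(good S) := by
      intro U
      induction U using Finset.induction_on with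
      | empty => intro _; simp
      | insert u U huU ihU =>
        intro hsub
        have huS : u ∈ S := hsub (Finset.mem_insert_self _ _)
        have hUS : U ⊆ S := fun x hx => hsub (Finset.mem_insert_of_mem hx)
        have e1 := ihU hUS
        have e2 := ih #(S \ insert u U) (by
          rw [← hSn]
          apply Finset.card_lt_card
          rw [Finset.ssubset_iff_of_subset Finset.sdiff_subset]
          exact ⟨u, huS, by simp⟩) (S \ insert u U) rfl (fun x hx => hST (Finset.mem_sdiff.1 hx).1)
          u (hST huS) (by simp)
        have e3 : insert u (S \ insert u U) = S \ U := by
          ext x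
          simp only [Finset.mem_insert, Finset.mem_sdiff]
          by_cases hx : x = u
          · subst hx; simp [huS, huU]
          · simp [hx]
        rw [e3] at e2
        rw [Finset.card_insert_of_notMem huU, pow_succ]
        calc (#(good (S \ insert u U)) : ℝ) * (β ^ #U * β)
            = (β * #(good (S \ insert u U))) * β ^ #U := by ring
          _ ≤ #(good (S \ U)) * β ^ #U := by gcongr
          _ ≤ _ := e1
    -- all extensions
    let ex : Finset (I → A) := (good S ×ˢ L i).image fun p => Function.update p.1 i p.2
    have hexc : #ex = #(good S) * #(L i) := by
      rw [Finset.card_image_of_injOn, Finset.card_product]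
      rintro ⟨f, a⟩ hf ⟨g, b⟩ hg heq
      simp only [Finset.coe_product, Set.mem_prod, Finset.mem_coe] at hf hg heq
      have hab : a = b := by simpa using congrFun heq i
      refine Prod.ext ?_ hab
      funext j
      by_cases hj : j = i
      · subst hj
        have h1 := ((mext _ _).1 ((mgood _ _).1 hf.1).1).2 j hiS
        have h2 := ((mext _ _).1 ((mgood _ _).1 hg.1).1).2 j hiS
        simp only [h1, h2]
      · have := congrFun heq j
        simpa [Function.update_of_ne hj] using this
    have hexres : ∀ g ∈ ex, g ∈ ext (insert i S) ∧ res S g ∈ good S := by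
      intro g hg
      simp only [ex, Finset.mem_image, Finset.mem_product, Prod.exists] at hg
      obtain ⟨f, a, ⟨hf, ha⟩, rfl⟩ := hg
      have hf' := (mext _ _).1 ((mgood _ _).1 hf).1
      constructor
      · rw [mext]
        constructor
        · intro j hj
          by_cases hji : j = i
          · subst hji; simpa using ha
          · rw [Function.update_of_ne hji]
            exact hf'.1 j (by simpa [hji] using hj)
        · intro j hj
          simp only [Finset.mem_insert, not_or] at hj
          rw [Function.update_of_ne hj.1]
          exact hf'.2 j hj.2
      · have : res S (Function.update f i a) = f := by
          funext j
          simp only [res]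
          split_ifs with hj
          · rw [Function.update_of_ne]; rintro rfl; exact hiS hj
          · exact (hf'.2 j hj).symm
        rw [this]; exact hf
    let Bi := B.filter fun b => i ∈ b.image Prod.fst
    let viol : Finset (I × A) → Finset (I → A) := fun b =>
      ex.filter fun g => (∀ p ∈ b, p.1 ∈ insert i S) ∧ ∀ p ∈ b, g p.1 = p.2
    have hcover : ex ⊆ good (insert i S) ∪ Bi.biUnion viol := by
      intro g hg
      rw [Finset.mem_union]
      by_cases hgood : g ∈ good (insert i S)
      · exact Or.inl hgood
      · right
        rw [mgood] at hgood
        push Not at hgood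
        obtain ⟨b, hb, hbd, hbv⟩ := hgood (hexres g hg).1
        rw [Finset.mem_biUnion]
        refine ⟨b, ?_, ?_⟩
        · simp only [Bi, Finset.mem_filter]
          refine ⟨hb, ?_⟩
          by_contra hno'
          have hno : ∀ a, (i, a) ∉ b := fun a ha => hno' (Finset.mem_image.2 ⟨_, ha, rfl⟩)
          have hbS : ∀ p ∈ b, p.1 ∈ S := by
            intro p hp
            have := hbd p hp
            rw [Finset.mem_insert] at this
            rcases this with h1 | h1
            · exact absurd (by rw [← h1]; exact hp) (hno p.2)
            · exact h1
          refine ((mgood _ _).1 (hexres g hg).2).2 b hb hbS fun p hp => ?_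
          simp only [res, hbS p hp, if_true]
          exact hbv p hp
        · simp only [viol, Finset.mem_filter]
          exact ⟨hg, hbd, hbv⟩
    have hviol : ∀ b ∈ Bi, (#(viol b) : ℝ) ≤ #(good S) * (β ^ (#b - 1))⁻¹ := by
      intro b hb
      simp only [Bi, Finset.mem_filter] at hb
      obtain ⟨hbB, hbi⟩ := hb
      obtain ⟨a, hab⟩ : ∃ a, (i, a) ∈ b := by
        obtain ⟨p, hp, rfl⟩ := Finset.mem_image.1 hbi
        exact ⟨p.2, hp⟩
      by_cases hne : (viol b).Nonempty
      · obtain ⟨g0, hg0⟩ := hne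
        simp only [viol, Finset.mem_filter] at hg0
        obtain ⟨hg0e, hbd, hbv⟩ := hg0
        let U : Finset I := (b.image Prod.fst).erase i
        have hUS : U ⊆ S := by
          intro x hx
          simp only [U, Finset.mem_erase, Finset.mem_image] at hx
          obtain ⟨hxi, p, hp, rfl⟩ := hx
          have := hbd p hp
          rw [Finset.mem_insert] at this
          tauto
        have hUc : #U = #b - 1 := by
          have him : i ∈ b.image Prod.fst := Finset.mem_image.2 ⟨_, hab, rfl⟩
          rw [Finset.card_erase_of_mem him, Finset.card_image_of_injOn]
          intro p hp q hq hpq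
          refine Prod.ext hpq ?_
          rw [← hbv p hp, ← hbv q hq, hpq]
        have hcard : #(viol b) ≤ #(good (S \ U)) := by
          apply Finset.card_le_card_of_injOn (res (S \ U))
          · intro g hg
            simp only [viol, Finset.coe_filter] at hg
            have h1 := (hexres g hg.1).2
            have h2 := hres (S \ U) S _ Finset.sdiff_subset h1
            have h3 : res (S \ U) (res S g) = res (S \ U) g := by
              funext j
              simp only [res]
              split_ifs with h1 h2
              · rfl
              · exact absurd (Finset.mem_sdiff.1 h1).1 h2
              · rfl
            rw [h3] at h2
            exact h2
          · intro g hg g' hg' heq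
            simp only [viol, Finset.coe_filter] at hg hg'
            funext j
            by_cases hjb : ∃ p ∈ b, p.1 = j
            · obtain ⟨p, hp, rfl⟩ := hjb
              rw [hg.2.2 p hp, hg'.2.2 p hp]
            · by_cases hjS : j ∈ S
              · have hj : j ∈ S \ U := by
                  rw [Finset.mem_sdiff]
                  refine ⟨hjS, fun hU => hjb ?_⟩
                  simp only [U, Finset.mem_erase, Finset.mem_image] at hU
                  exact hU.2
                have := congrFun heq j
                simpa only [res, hj, if_true] using this
              · have hji : j ∉ insert i S := by
                  rw [Finset.mem_insert, not_or]
                  exact ⟨fun hh => hjb ⟨_, hab, hh.symm⟩, hjS⟩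
                rw [((mext _ _).1 (hexres g hg.1).1).2 j hji, ((mext _ _).1 (hexres g' hg'.1).1).2 j hji]
        have hr := rem U hUS
        rw [hUc] at hr
        have hp : 0 < β ^ (#b - 1) := by positivity
        rw [← div_eq_mul_inv, le_div_iff₀ hp]
        refine le_trans ?_ hr
        gcongr
      · rw [Finset.not_nonempty_iff_eq_empty] at hne
        rw [hne]
        simp only [Finset.card_empty, Nat.cast_zero]
        positivity
    have hfin : (#(good S) : ℝ) * #(L i) ≤ #(good (insert i S))
        + #(good S) * ∑ b ∈ Bi, (β ^ (#b - 1))⁻¹ := by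
      have h1 : #ex ≤ #(good (insert i S)) + ∑ b ∈ Bi, #(viol b) :=
        (Finset.card_le_card hcover).trans ((Finset.card_union_le _ _).trans
          (Nat.add_le_add_left Finset.card_biUnion_le _))
      rw [hexc] at h1
      have h2 : ((#(good S) * #(L i) : ℕ) : ℝ) ≤ ((#(good (insert i S)) + ∑ b ∈ Bi, #(viol b) : ℕ) : ℝ) := by
        exact_mod_cast h1
      push_cast at h2
      refine h2.trans ?_
      rw [Finset.mul_sum]
      have h3 := Finset.sum_le_sum hviol
      linarith
    have hi := h i hiT
    have hg0 : (0 : ℝ) ≤ #(good S) := by positivity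
    have := mul_le_mul_of_nonneg_left hi hg0
    simp only [Bi] at hfin
    linarith
  have pos : ∀ S : Finset I, S ⊆ T → 0 < #(good S) := by
    intro S
    induction S using Finset.induction_on with
    | empty =>
      intro _
      apply Finset.card_pos.2
      refine ⟨fun _ => a0, ?_⟩
      rw [mgood, mext]
      refine ⟨⟨by simp, by simp⟩, ?_⟩
      intro b hb hbd
      obtain ⟨p, hp⟩ := hB b hb
      simpa using hbd p hp
    | insert i S hi ihS =>
      intro hsub
      have h1 := ihS fun x hx => hsub (Finset.mem_insert_of_mem hx)
      have h2 := main _ S rfl (fun x hx => hsub (Finset.mem_insert_of_mem hx)) i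
        (hsub (Finset.mem_insert_self _ _)) hi
      have h3 : (0 : ℝ) < β * #(good S) := by
        have : (0 : ℝ) < #(good S) := by exact_mod_cast h1
        positivity
      exact_mod_cast lt_of_lt_of_le h3 h2
  obtain ⟨σ, hσ⟩ := Finset.card_pos.1 (pos T le_rfl)
  rw [mgood, mext] at hσ
  exact ⟨σ, hσ.1.1, hσ.2⟩

end AVD

namespace AVD
open Finset

/-- fragile pairs -/
def Fr {V : Type*} (G : SimpleGraph V) (big : V → Prop) (u v : V) : Prop :=
  G.Adj u v ∧ ¬ big u ∧ ¬ big v ∧ ∀ w, (G.Adj u w ∨ G.Adj v w) → w ≠ u → w ≠ v → big w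

lemma Fr.symm {V : Type*} {G : SimpleGraph V} {big : V → Prop} {u v : V} (h : Fr G big u v) :
    Fr G big v u :=
  ⟨h.1.symm, h.2.2.1, h.2.1, fun w hw h1 h2 => h.2.2.2 w hw.symm h2 h1⟩

lemma Fr.unique {V : Type*} {G : SimpleGraph V} {big : V → Prop} {u v w : V} (h : Fr G big u v)
    (h' : Fr G big u w) : v = w := by
  by_contra hne
  exact h'.2.2.1 (h.2.2.2 w (Or.inl h'.1) h'.1.ne.symm (Ne.symm hne))

open Classical in
/-- the partner of a vertex -/
noncomputable def pt {V : Type*} (G : SimpleGraph V) (big : V → Prop) (u : V) : V :=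
  if h : ∃ v, Fr G big u v then h.choose else u

lemma pt_eq {V : Type*} {G : SimpleGraph V} {big : V → Prop} {u v : V} (h : Fr G big u v) :
    pt G big u = v := by
  have h' : ∃ v, Fr G big u v := ⟨v, h⟩
  rw [pt, dif_pos h']
  exact h'.choose_spec.unique h

lemma pt_fr {V : Type*} {G : SimpleGraph V} {big : V → Prop} {u : V} (h : pt G big u ≠ u) :
    Fr G big u (pt G big u) := by
  by_cases h' : ∃ v, Fr G big u v
  · obtain ⟨v, hv⟩ := h'
    rw [pt_eq hv]; exact hv
  · rw [pt, dif_neg h'] at h; exact absurd rfl h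

lemma pt_pt {V : Type*} (G : SimpleGraph V) (big : V → Prop) (u : V) :
    pt G big (pt G big u) = u := by
  by_cases h : pt G big u = u
  · rw [h, h]
  · exact pt_eq (pt_fr h).symm

lemma base_col {V : Type*} [Fintype V] [DecidableEq V] (G : SimpleGraph V) [DecidableRel G.Adj]
    (Δ : ℕ) (hΔ : ∀ v, G.degree v ≤ Δ) (big : V → Prop) (hsm : ∀ v, ¬ big v → 2 * G.degree v ≤ Δ) :
    ∃ c : Sym2 V → ℕ, ProperEdgeColoring G c ∧ (∀ e ∈ G.edgeSet, c e < Δ + 2) ∧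
      ∀ u v, Fr G big u v → ∀ x y, G.Adj u x → x ≠ v → G.Adj v y → y ≠ u →
        c s(u, x) ≠ c s(v, y) := by
  classical
  let p := pt G big
  have hpp : ∀ u, p (p u) = u := pt_pt G big
  let r : V → Sym2 V := fun u => s(u, p u)
  have hr : ∀ u v, r u = r v ↔ v = u ∨ v = p u := by
    intro u v
    simp only [r, Sym2.eq_iff]
    constructor
    · rintro (⟨h1, _⟩ | ⟨_, h2⟩)
      · exact Or.inl h1.symm
      · exact Or.inr h2.symm
    · rintro (h | h)
      · left; subst h; exact ⟨rfl, rfl⟩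
      · right; subst h; exact ⟨(hpp u).symm, rfl⟩
  let E : Finset (Sym2 V) := G.edgeFinset.filter fun e => ¬ (Sym2.map r e).IsDiag
  have hEG : ∀ e ∈ E, e ∈ G.edgeSet := by
    intro e he
    simp only [E, Finset.mem_filter, SimpleGraph.mem_edgeFinset] at he
    exact he.1
  have hD : ∀ x, #{e ∈ E | x ∈ Sym2.map r e} ≤ Δ := by
    intro x
    by_cases hx : ∃ u, r u = x
    · obtain ⟨u, rfl⟩ := hx
      have hsub : ({e ∈ E | r u ∈ Sym2.map r e} : Finset _) ⊆
          G.incidenceFinset u ∪ G.incidenceFinset (p u) := by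
        intro e he
        rw [Finset.mem_filter] at he
        obtain ⟨a, ha, hau⟩ := Sym2.mem_map.1 he.2
        rw [Finset.mem_union, SimpleGraph.mem_incidenceFinset, SimpleGraph.mem_incidenceFinset]
        rcases (hr u a).1 hau.symm with rfl | rfl
        · left; exact ⟨hEG e he.1, ha⟩
        · right; exact ⟨hEG e he.1, ha⟩
      refine (Finset.card_le_card hsub).trans ?_
      by_cases hpu : p u = u
      · rw [hpu, Finset.union_self, SimpleGraph.card_incidenceFinset_eq_degree]; exact hΔ u
      · have hf := pt_fr hpu
        refine (Finset.card_union_le _ _).trans ?_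
        rw [SimpleGraph.card_incidenceFinset_eq_degree, SimpleGraph.card_incidenceFinset_eq_degree]
        have h1 := hsm u hf.2.1
        have h2 := hsm (p u) hf.2.2.1
        omega
    · have : ({e ∈ E | x ∈ Sym2.map r e} : Finset _) = ∅ := by
        rw [Finset.filter_eq_empty_iff]
        intro e _ h
        obtain ⟨a, _, ha⟩ := Sym2.mem_map.1 h
        exact hx ⟨a, ha⟩
      rw [this]; simp
  have hμ : ∀ q, #{e ∈ E | Sym2.map r e = q} ≤ 2 := by
    intro q
    by_cases hne : ({e ∈ E | Sym2.map r e = q} : Finset _).Nonempty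
    · obtain ⟨e, he⟩ := hne
      rw [Finset.mem_filter] at he
      obtain ⟨heE, rfl⟩ := he
      induction e using Sym2.ind with
      | _ a b =>
      have hadj : G.Adj a b := hEG _ heE
      have hnd : ¬ (r a = r b) := by
        have := (Finset.mem_filter.1 heE).2
        simpa using this
      have hor : p a = a ∨ p b = b := by
        by_contra hcon
        push Not at hcon
        have h1 := pt_fr hcon.1
        have h2 := pt_fr hcon.2
        have h3 := h1.2.2.2 b (Or.inl hadj) hadj.ne.symm (by
          intro h; apply hnd; rw [hr]; right; exact h)
        exact h2.2.1 h3
      have key : ∀ e', Sym2.map r e' = Sym2.map r s(a, b) →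
          ∃ a' b', e' = s(a', b') ∧ (a' = a ∨ a' = p a) ∧ (b' = b ∨ b' = p b) := by
        intro e'
        induction e' using Sym2.ind with
        | _ a' b' =>
        intro h
        simp only [Sym2.map_mk, Sym2.eq_iff] at h
        rcases h with ⟨h1, h2⟩ | ⟨h1, h2⟩
        · exact ⟨a', b', rfl, (hr a a').1 h1.symm, (hr b b').1 h2.symm⟩
        · exact ⟨b', a', Sym2.eq_swap, (hr a b').1 h2.symm, (hr b a').1 h1.symm⟩
      rcases hor with h | h
      · refine (Finset.card_le_card (t := {s(a, b), s(a, p b)}) ?_).trans Finset.card_le_two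
        intro e' he'
        rw [Finset.mem_filter] at he'
        obtain ⟨a', b', rfl, ha, hb⟩ := key e' he'.2
        rw [h, or_self] at ha
        subst ha
        rcases hb with rfl | rfl <;> simp
      · refine (Finset.card_le_card (t := {s(a, b), s(p a, b)}) ?_).trans Finset.card_le_two
        intro e' he'
        rw [Finset.mem_filter] at he'
        obtain ⟨a', b', rfl, ha, hb⟩ := key e' he'.2
        rw [h, or_self] at hb
        subst hb
        rcases ha with rfl | rfl <;> simp
    · rw [Finset.not_nonempty_iff_eq_empty] at hne
      rw [hne]; simp
  obtain ⟨c1, hc1, hc2⟩ := merged E r Δ 2 (Δ + 2) (fun e he => (Finset.mem_filter.1 he).2) hD hμ le_rfl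
  have hf : ∀ x : Sym2 V, ∃ n, n < Δ + 2 ∧ ∀ e ∈ E, x ∈ Sym2.map r e → c1 e ≠ n := by
    intro x
    have : ∃ n ∈ range (Δ + 2), n ∉ ({e ∈ E | x ∈ Sym2.map r e} : Finset _).image c1 := by
      apply Finset.exists_mem_notMem_of_card_lt_card
      have := Finset.card_image_le (s := ({e ∈ E | x ∈ Sym2.map r e} : Finset _)) (f := c1)
      have := hD x
      rw [Finset.card_range]
      omega
    obtain ⟨n, hn, hn2⟩ := this
    refine ⟨n, Finset.mem_range.1 hn, fun e he hx h => hn2 ?_⟩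
    exact Finset.mem_image.2 ⟨e, Finset.mem_filter.2 ⟨he, hx⟩, h⟩
  choose f hf1 hf2 using hf
  -- colour of the fragile edge `s(u, p u)` is `f s(u, p u)`
  have hdiag : ∀ u v, G.Adj u v → s(u, v) ∉ E → v = p u := by
    intro u v huv h
    simp only [E, Finset.mem_filter, SimpleGraph.mem_edgeFinset, not_and, not_not] at h
    have h2 := h huv
    simp only [Sym2.map_mk, Sym2.mk_isDiag_iff] at h2
    rcases (hr u v).1 h2 with h3 | h3
    · exact absurd h3 huv.ne.symm
    · exact h3
  let c : Sym2 V → ℕ := fun e => if e ∈ E then c1 e else f e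
  have hmix : ∀ e₁ ∈ G.edgeSet, ∀ e₂ ∈ G.edgeSet, e₁ ∈ E → e₂ ∉ E → (∃ v, v ∈ e₁ ∧ v ∈ e₂) →
      c e₁ ≠ c e₂ := by
    rintro e₁ h1 e₂ h2 hE1 hE2 ⟨v, hv1, hv2⟩
    simp only [c, hE1, hE2, if_true, if_false]
    apply hf2 _ _ hE1
    have : e₂ = r v := by
      obtain ⟨w, rfl⟩ := Sym2.mem_iff_exists.1 hv2
      rw [hdiag v w h2 hE2]
    rw [this]
    exact Sym2.mem_map.2 ⟨v, hv1, rfl⟩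
  refine ⟨c, ?_, ?_, ?_⟩
  · rintro e₁ h1 e₂ h2 hne ⟨v, hv1, hv2⟩
    by_cases hE1 : e₁ ∈ E <;> by_cases hE2 : e₂ ∈ E
    · simp only [c, hE1, hE2, if_true]
      exact hc2 e₁ hE1 e₂ hE2 hne ⟨r v, Sym2.mem_map.2 ⟨v, hv1, rfl⟩, Sym2.mem_map.2 ⟨v, hv2, rfl⟩⟩
    · exact hmix e₁ h1 e₂ h2 hE1 hE2 ⟨v, hv1, hv2⟩
    · exact (hmix e₂ h2 e₁ h1 hE2 hE1 ⟨v, hv2, hv1⟩).symm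
    · exfalso
      obtain ⟨w, rfl⟩ := Sym2.mem_iff_exists.1 hv2
      obtain ⟨w', rfl⟩ := Sym2.mem_iff_exists.1 hv1
      apply hne
      rw [hdiag v w h2 hE2, hdiag v w' h1 hE1]
  · intro e _
    simp only [c]
    split_ifs with h
    · exact hc1 e h
    · exact hf1 e
  · intro u v huv x y hux hxv hvy hyu
    have hpu : p u = v := pt_eq huv
    have hpv : p v = u := pt_eq huv.symm
    have h1 : s(u, x) ∈ E := by
      by_contra h; apply hxv; rw [hdiag u x hux h, hpu]
    have h2 : s(v, y) ∈ E := by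
      by_contra h; apply hyu; rw [hdiag v y hvy h, hpv]
    simp only [c, h1, h2, if_true]
    refine hc2 _ h1 _ h2 ?_ ⟨r u, ?_, ?_⟩
    · intro h
      rw [Sym2.eq_iff] at h
      rcases h with ⟨h, _⟩ | ⟨_, h⟩
      · exact huv.1.ne h
      · exact hxv h
    · exact Sym2.mem_map.2 ⟨u, by simp, rfl⟩
    · exact Sym2.mem_map.2 ⟨v, by simp, by rw [hr]; right; exact hpv.symm⟩

end AVD

namespace AVD
open Finset

lemma card_code {α β : Type*} [Fintype α] [DecidableEq β] (S : Finset β) (f : α → β)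
    (h : ∀ b ∈ S, ∃ a, f a = b) : #S ≤ Fintype.card α := by
  have : S ⊆ Finset.univ.image f := by
    intro b hb
    obtain ⟨a, ha⟩ := h b hb
    exact Finset.mem_image.2 ⟨a, Finset.mem_univ _, ha⟩
  exact (Finset.card_le_card this).trans Finset.card_image_le

lemma enum_exists {V : Type*} [Nonempty V] (s : Finset V) (n : ℕ) (h : #s ≤ n) :
    ∃ f : Fin n → V, ∀ w ∈ s, ∃ i, f i = w := by
  classical
  let e := s.equivFin
  refine ⟨fun i => if h : i.1 < #s then (e.symm ⟨i.1, h⟩).1 else Classical.arbitrary V, ?_⟩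
  intro w hw
  refine ⟨⟨(e ⟨w, hw⟩).1, lt_of_lt_of_le (e ⟨w, hw⟩).2 h⟩, ?_⟩
  simp

open Classical in
/-- the neighbour along colour `n` -/
noncomputable def col {V : Type*} (G : SimpleGraph V) (c : Sym2 V → ℕ) (u : V) (n : ℕ) : V :=
  if h : ∃ w, G.Adj u w ∧ c s(u, w) = n then h.choose else u

lemma proper_inj {V : Type*} {G : SimpleGraph V} {c : Sym2 V → ℕ} (hc : ProperEdgeColoring G c)
    {u w w' : V} (h : G.Adj u w) (h' : G.Adj u w') (he : c s(u, w) = c s(u, w')) : w = w' := by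
  by_contra hne
  refine hc s(u, w) h s(u, w') h' ?_ ⟨u, by simp, by simp⟩ he
  intro h2
  apply hne
  rw [Sym2.eq_iff] at h2
  rcases h2 with h2 | h2
  · exact h2.2
  · rw [h2.2, ← h2.1]

lemma col_eq {V : Type*} {G : SimpleGraph V} {c : Sym2 V → ℕ} (hc : ProperEdgeColoring G c)
    {u w : V} {n : ℕ} (h : G.Adj u w) (hn : c s(u, w) = n) : col G c u n = w := by
  have hex : ∃ w, G.Adj u w ∧ c s(u, w) = n := ⟨w, h, hn⟩
  rw [col, dif_pos hex]
  exact proper_inj hc hex.choose_spec.1 h (hex.choose_spec.2.trans hn.symm)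

/-- justification -/
def Just {V : Type*} (G : SimpleGraph V) (c : Sym2 V → ℕ) (u v w z t : V) : Prop :=
  G.Adj u w ∧ G.Adj z t ∧ (z = v ∨ t = v) ∧ c s(z, t) = c s(u, w)

lemma just_code1 {V : Type*} {G : SimpleGraph V} {c : Sym2 V → ℕ} (hc : ProperEdgeColoring G c)
    {u v w z t : V} (h : Just G c u v w z t) :
    ∃ o : Bool, z = (if o then v else col G c v (c s(u, w))) ∧
      t = (if o then col G c v (c s(u, w)) else v) := by
  obtain ⟨_, h2, h3, h4⟩ := h
  rcases h3 with rfl | rfl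
  · exact ⟨true, by simp, by simp [col_eq hc h2 h4]⟩
  · refine ⟨false, ?_, by simp⟩
    rw [Sym2.eq_swap] at h4
    simp [col_eq hc h2.symm h4]

lemma just_code2 {V : Type*} {G : SimpleGraph V} {c : Sym2 V → ℕ} (hc : ProperEdgeColoring G c)
    {u v w z t : V} (h : Just G c u v w z t) :
    (∃ o : Bool, v = if o then z else t) ∧ w = col G c u (c s(z, t)) := by
  obtain ⟨h1, h2, h3, h4⟩ := h
  refine ⟨?_, (col_eq hc h1 h4.symm).symm⟩
  rcases h3 with rfl | rfl
  · exact ⟨true, by simp⟩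
  · exact ⟨false, by simp⟩

section events
variable {V : Type*} [Fintype V] [DecidableEq V] (G : SimpleGraph V) (c : Sym2 V → ℕ)
  (p g : V → V) (Sp : V → V → Finset V)

/-- events -/
def Q1 (b : Finset ((V × Bool) × V)) : Prop :=
  ∃ y w, G.Adj y w ∧ b = {((y, false), w), ((y, true), w)}
/-- events -/
def Q2 (b : Finset ((V × Bool) × V)) : Prop :=
  ∃ u v j j', p u = v ∧ p v = u ∧ G.Adj (g u) u ∧ G.Adj (g v) v ∧
    b = {((g u, j), u), ((g v, j'), v)}
/-- events -/
def Q3 (b : Finset ((V × Bool) × V)) : Prop :=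
  ∃ u v j w w', G.Adj u v ∧ #(Sp u v) ≤ 17 ∧ w ∈ Sp u v ∧ w' ∈ Sp u v ∧
    b = {((u, j), w), ((u, !j), w')}
/-- events -/
def Q4 (b : Finset ((V × Bool) × V)) : Prop :=
  ∃ u v j w w' z a t, G.Adj u v ∧ #(Sp u v) ≤ 17 ∧ w ∈ Sp u v ∧ Just G c u v w' z t ∧
    b = {((u, j), w), ((u, !j), w'), ((z, a), t)}
/-- events -/
def Q5 (b : Finset ((V × Bool) × V)) : Prop :=
  ∃ u v j w w' z a t z' a' t', G.Adj u v ∧ Just G c u v w z t ∧ Just G c u v w' z' t' ∧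
    b = {((u, j), w), ((u, !j), w'), ((z, a), t), ((z', a'), t')}
/-- events -/
def Q6 (b : Finset ((V × Bool) × V)) : Prop :=
  ∃ w, ∀ q ∈ b, q.2 = w ∧ G.Adj q.1.1 w

variable {G c p g Sp} {Δ : ℕ} (nb : V → Fin Δ → V) (hnb : ∀ u w, G.Adj u w → ∃ n, nb u n = w)
  (sp : V → V → Fin 17 → V) (hsp : ∀ u v, #(Sp u v) ≤ 17 → ∀ w ∈ Sp u v, ∃ n, sp u v n = w)

include hnb in
lemma count1 (i : V × Bool) (F : Finset (Finset ((V × Bool) × V)))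
    (hF : ∀ b ∈ F, Q1 G b ∧ i ∈ b.image Prod.fst) : #F ≤ Δ := by
  refine (card_code F (fun n : Fin Δ => {((i.1, false), nb i.1 n), ((i.1, true), nb i.1 n)}) ?_).trans
    (by simp)
  intro b hb
  obtain ⟨⟨y, w, hyw, rfl⟩, hi⟩ := hF b hb
  have : i.1 = y := by
    simp at hi
    rcases hi with rfl | rfl <;> rfl
  subst this
  obtain ⟨n, rfl⟩ := hnb _ _ hyw
  exact ⟨n, rfl⟩

include hnb in
lemma count2 (i : V × Bool) (F : Finset (Finset ((V × Bool) × V)))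
    (hF : ∀ b ∈ F, Q2 G p g b ∧ i ∈ b.image Prod.fst) : #F ≤ 2 * Δ := by
  refine (card_code F (fun n : Fin Δ × Bool =>
    {(i, nb i.1 n.1), ((g (p (nb i.1 n.1)), n.2), p (nb i.1 n.1))}) ?_).trans
    (by simp [mul_comm])
  intro b hb
  obtain ⟨⟨u, v, j, j', huv, hvu, h1, h2, rfl⟩, hi⟩ := hF b hb
  simp at hi
  rcases hi with rfl | rfl
  · obtain ⟨n, hn⟩ := hnb _ _ h1
    refine ⟨(n, j'), ?_⟩
    simp only [hn, huv]
  · obtain ⟨n, hn⟩ := hnb _ _ h2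
    refine ⟨(n, j), ?_⟩
    simp only [hn, hvu]
    rw [Finset.pair_comm]

include hnb hsp in
lemma count3 (i : V × Bool) (F : Finset (Finset ((V × Bool) × V)))
    (hF : ∀ b ∈ F, Q3 G Sp b ∧ i ∈ b.image Prod.fst) : #F ≤ 578 * Δ := by
  refine (card_code F (fun n : Fin Δ × Fin 17 × Fin 17 × Bool =>
    {((i.1, n.2.2.2), sp i.1 (nb i.1 n.1) n.2.1), ((i.1, !n.2.2.2), sp i.1 (nb i.1 n.1) n.2.2.1)})
     ?_).trans (by simp; omega)
  intro b hb
  obtain ⟨⟨u, v, j, w, w', huv, h17, hw, hw', rfl⟩, hi⟩ := hF b hb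
  have : i.1 = u := by
    simp at hi
    rcases hi with rfl | rfl <;> rfl
  subst this
  obtain ⟨n, rfl⟩ := hnb _ _ huv
  obtain ⟨m, rfl⟩ := hsp _ _ h17 _ hw
  obtain ⟨m', rfl⟩ := hsp _ _ h17 _ hw'
  exact ⟨(n, m, m', j), rfl⟩

variable (hc : ProperEdgeColoring G c)

include hnb hsp hc in
lemma count4 (i : V × Bool) (F : Finset (Finset ((V × Bool) × V)))
    (hF : ∀ b ∈ F, Q4 G c Sp b ∧ i ∈ b.image Prod.fst) : #F ≤ 204 * Δ ^ 2 := by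
  refine (card_code F (fun n : (Fin Δ × Fin 17 × Fin Δ × Bool × Bool × Bool) ⊕
      (Fin Δ × Bool × Fin Δ × Fin 17 × Bool) =>
    match n with
    | .inl (n, m, n', o, a, j) =>
      let u := i.1
      let v := nb u n
      let w' := nb u n'
      let x := col G c v (c s(u, w'))
      {((u, j), sp u v m), ((u, !j), w'), ((if o then v else x, a), if o then x else v)}
    | .inr (n, o, n', m, j) =>
      let z := i.1
      let t := nb z n
      let v := if o then z else t
      let u := nb v n'
      {((u, j), sp u v m), ((u, !j), col G c u (c s(z, t))), (i, t)}) ?_).trans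
     (by simp; ring_nf; omega)
  intro b hb
  obtain ⟨⟨u, v, j, w, w', z, a, t, huv, h17, hw, hJ, rfl⟩, hi⟩ := hF b hb
  obtain ⟨m, rfl⟩ := hsp _ _ h17 _ hw
  have : i.1 = u ∨ i = (z, a) := by
    simp at hi
    rcases hi with rfl | rfl | rfl <;> simp
  rcases this with rfl | rfl
  · obtain ⟨n, rfl⟩ := hnb _ _ huv
    obtain ⟨n', rfl⟩ := hnb _ _ hJ.1
    obtain ⟨o, rfl, rfl⟩ := just_code1 hc hJ
    exact ⟨.inl (n, m, n', o, a, j), rfl⟩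
  · obtain ⟨⟨o, rfl⟩, rfl⟩ := just_code2 hc hJ
    obtain ⟨n, rfl⟩ := hnb _ _ hJ.2.1
    obtain ⟨n', rfl⟩ := hnb _ _ huv.symm
    exact ⟨.inr (n, o, n', m, j), rfl⟩

include hnb hc in
lemma count5 (i : V × Bool) (F : Finset (Finset ((V × Bool) × V)))
    (hF : ∀ b ∈ F, Q5 G c b ∧ i ∈ b.image Prod.fst) : #F ≤ 64 * Δ ^ 3 := by
  refine (card_code F (fun n : (Fin Δ × Fin Δ × Fin Δ × Bool × Bool × Bool × Bool × Bool) ⊕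
      (Fin Δ × Bool × Fin Δ × Fin Δ × Bool × Bool × Bool) =>
    match n with
    | .inl (n, n', n'', o, a, o', a', j) =>
      let u := i.1
      let v := nb u n
      let w := nb u n'
      let w' := nb u n''
      let x := col G c v (c s(u, w))
      let x' := col G c v (c s(u, w'))
      {((u, j), w), ((u, !j), w'), ((if o then v else x, a), if o then x else v),
        ((if o' then v else x', a'), if o' then x' else v)}
    | .inr (n, o, n', n'', o', a', j) =>
      let z := i.1
      let t := nb z n
      let v := if o then z else t
      let u := nb v n'
      let w' := nb u n''
      let x' := col G c v (c s(u, w'))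
      {((u, j), col G c u (c s(z, t))), ((u, !j), w'), (i, t),
        ((if o' then v else x', a'), if o' then x' else v)}) ?_).trans
     (by simp; ring_nf; omega)
  intro b hb
  obtain ⟨⟨u, v, j, w, w', z, a, t, z', a', t', huv, hJ, hJ', rfl⟩, hi⟩ := hF b hb
  have : i.1 = u ∨ i = (z, a) ∨ i = (z', a') := by
    simp at hi
    rcases hi with rfl | rfl | rfl | rfl <;> simp
  rcases this with rfl | rfl | rfl
  · obtain ⟨n, rfl⟩ := hnb _ _ huv
    obtain ⟨n', rfl⟩ := hnb _ _ hJ.1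
    obtain ⟨n'', rfl⟩ := hnb _ _ hJ'.1
    obtain ⟨o, rfl, rfl⟩ := just_code1 hc hJ
    obtain ⟨o', rfl, rfl⟩ := just_code1 hc hJ'
    exact ⟨.inl (n, n', n'', o, a, o', a', j), rfl⟩
  · obtain ⟨⟨o, rfl⟩, rfl⟩ := just_code2 hc hJ
    obtain ⟨n'', rfl⟩ := hnb _ _ hJ'.1
    obtain ⟨o', rfl, rfl⟩ := just_code1 hc hJ'
    obtain ⟨n, rfl⟩ := hnb _ _ hJ.2.1
    obtain ⟨n', rfl⟩ := hnb _ _ huv.symm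
    exact ⟨.inr (n, o, n', n'', o', a', j), rfl⟩
  · obtain ⟨⟨o, rfl⟩, rfl⟩ := just_code2 hc hJ'
    obtain ⟨n'', rfl⟩ := hnb _ _ hJ.1
    obtain ⟨o', rfl, rfl⟩ := just_code1 hc hJ
    obtain ⟨n, rfl⟩ := hnb _ _ hJ'.2.1
    obtain ⟨n', rfl⟩ := hnb _ _ huv.symm
    refine ⟨.inr (n, o, n', n'', o', a, !j), ?_⟩
    simp only [Bool.not_not]
    ext q
    simp only [Finset.mem_insert, Finset.mem_singleton]
    tauto

lemma count6 [DecidableRel G.Adj] (hΔ : ∀ v, G.degree v ≤ Δ) (i : V × Bool)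
    (F : Finset (Finset ((V × Bool) × V)))
    (hF : ∀ b ∈ F, (#b = 15 ∧ Q6 G b) ∧ i ∈ b.image Prod.fst) :
    #F ≤ G.degree i.1 * (2 * Δ).choose 14 := by
  let N : V → Finset ((V × Bool) × V) := fun w =>
    (G.neighborFinset w ×ˢ (Finset.univ : Finset Bool)).image fun j => (j, w)
  have hN : ∀ w, #(N w) ≤ 2 * Δ := by
    intro w
    refine Finset.card_image_le.trans ?_
    rw [Finset.card_product, SimpleGraph.card_neighborFinset_eq_degree]
    have := hΔ w
    simp
    omega
  have hsub : F ⊆ (G.neighborFinset i.1).biUnion fun w =>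
      ((N w).powersetCard 14).image (insert (i, w)) := by
    intro b hb
    obtain ⟨⟨h15, w, hw⟩, hi⟩ := hF b hb
    obtain ⟨q, hq, rfl⟩ := Finset.mem_image.1 hi
    obtain ⟨hqw, hadj⟩ := hw q hq
    have hqe : (q.1, w) = q := by rw [← hqw]
    simp only [Finset.mem_biUnion, Finset.mem_image, SimpleGraph.mem_neighborFinset]
    refine ⟨w, hadj, b.erase q, ?_, by rw [hqe, Finset.insert_erase hq]⟩
    rw [Finset.mem_powersetCard, Finset.card_erase_of_mem hq, h15]
    refine ⟨?_, rfl⟩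
    intro q' hq'
    have hq2 := hw q' (Finset.mem_of_mem_erase hq')
    simp only [N, Finset.mem_image, Finset.mem_product, SimpleGraph.mem_neighborFinset,
      Finset.mem_univ, and_true]
    exact ⟨q'.1, hq2.2.symm, by rw [← hq2.1]⟩
  refine (Finset.card_le_card hsub).trans ?_
  refine (Finset.card_biUnion_le_card_mul _ _ ((2 * Δ).choose 14) ?_).trans ?_
  · intro w _
    refine Finset.card_image_le.trans ?_
    rw [Finset.card_powersetCard]
    exact Nat.choose_le_choose _ (hN w)
  · rw [SimpleGraph.card_neighborFinset_eq_degree]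

end events
end AVD

namespace AVD
open Finset

lemma sum_union_le' {α : Type*} [DecidableEq α] (s t : Finset α) (f : α → ℝ)
    (hf : ∀ a, 0 ≤ f a) : ∑ a ∈ s ∪ t, f a ≤ ∑ a ∈ s, f a + ∑ a ∈ t, f a := by
  rw [← Finset.sum_union_inter]
  have : 0 ≤ ∑ a ∈ s ∩ t, f a := Finset.sum_nonneg fun a _ => hf a
  linarith

lemma sum_part {α : Type*} (S : Finset (Finset α)) (k n : ℕ) (β : ℝ) (hβ : 0 < β)
    (h : ∀ b ∈ S, #b = k + 1) (hn : #S ≤ n) :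
    ∑ b ∈ S, (β ^ (#b - 1))⁻¹ ≤ n * (β ^ k)⁻¹ := by
  rw [Finset.sum_congr rfl (g := fun _ => (β ^ k)⁻¹) (by intro b hb; rw [h b hb]; simp)]
  rw [Finset.sum_const, nsmul_eq_mul]
  have : (0:ℝ) ≤ (β ^ k)⁻¹ := by positivity
  have : (#S : ℝ) ≤ n := by exact_mod_cast hn
  gcongr

lemma arith (Δ e : ℕ) (d : ℝ) (h6 : (10:ℝ) ^ 6 ≤ Δ) (hd : 49 / 100 * (Δ:ℝ) ≤ d) (he : d ≤ e) :
    9 / 10 * d + ((Δ : ℕ) * ((9 / 10 * d) ^ 1)⁻¹ + (2 * Δ : ℕ) * ((9 / 10 * d) ^ 1)⁻¹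
      + (578 * Δ : ℕ) * ((9 / 10 * d) ^ 1)⁻¹ + (204 * Δ ^ 2 : ℕ) * ((9 / 10 * d) ^ 2)⁻¹
      + (64 * Δ ^ 3 : ℕ) * ((9 / 10 * d) ^ 3)⁻¹
      + (e * (2 * Δ).choose 14 : ℕ) * ((9 / 10 * d) ^ 14)⁻¹) ≤ e := by
  have hD : (0:ℝ) < Δ := by linarith [show (0:ℝ) < 10 ^ 6 by norm_num]
  have hd0 : 0 < d := by linarith
  set β := 9 / 10 * d with hβ
  have hβ0 : 0 < β := by positivity
  set r := (Δ:ℝ) / β with hr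
  have hr0 : 0 ≤ r := by positivity
  have hr1 : r ≤ 227 / 100 := by
    rw [hr, div_le_iff₀ hβ0]; linarith
  have hch : ((2 * Δ).choose 14 : ℝ) ≤ (2 * Δ : ℝ) ^ 14 / (Nat.factorial 14 : ℕ) := by
    have := Nat.choose_le_pow_div (α := ℝ) 14 (2 * Δ)
    push_cast at this ⊢
    exact this
  have h14 : ((2 * Δ).choose 14 : ℝ) * (β ^ 14)⁻¹ ≤ 1 / 50 := by
    calc ((2 * Δ).choose 14 : ℝ) * (β ^ 14)⁻¹
        ≤ (2 * Δ : ℝ) ^ 14 / (Nat.factorial 14 : ℕ) * (β ^ 14)⁻¹ := by gcongr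
      _ = 2 ^ 14 * r ^ 14 / (Nat.factorial 14 : ℕ) := by
          rw [hr]; field_simp
      _ ≤ 2 ^ 14 * (227 / 100) ^ 14 / (Nat.factorial 14 : ℕ) := by gcongr
      _ ≤ 1 / 50 := by
          norm_num [Nat.factorial]
  have e1 : (Δ:ℝ) * (β ^ 1)⁻¹ = r := by rw [hr]; field_simp
  have e2 : (Δ:ℝ) ^ 2 * (β ^ 2)⁻¹ = r ^ 2 := by rw [hr]; field_simp
  have e3 : (Δ:ℝ) ^ 3 * (β ^ 3)⁻¹ = r ^ 3 := by rw [hr]; field_simp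
  have r2 : r ^ 2 ≤ (227 / 100) ^ 2 := by gcongr
  have r3 : r ^ 3 ≤ (227 / 100) ^ 3 := by gcongr
  push_cast
  have he0 : (0:ℝ) ≤ e := by linarith
  have h15 : (e:ℝ) * (((2 * Δ).choose 14 : ℝ) * (β ^ 14)⁻¹) ≤ e * (1 / 50) := by gcongr
  norm_num at r2 r3
  have h6 : (1000000:ℝ) ≤ Δ := le_trans (by norm_num) h6
  have : 2 * (Δ:ℝ) * (β ^ 1)⁻¹ = 2 * r := by rw [mul_assoc, e1]
  have : 578 * (Δ:ℝ) * (β ^ 1)⁻¹ = 578 * r := by rw [mul_assoc, e1]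
  have : 204 * (Δ:ℝ) ^ 2 * (β ^ 2)⁻¹ = 204 * r ^ 2 := by rw [mul_assoc, e2]
  have : 64 * (Δ:ℝ) ^ 3 * (β ^ 3)⁻¹ = 64 * r ^ 3 := by rw [mul_assoc, e3]
  have : (e:ℝ) * ((2 * Δ).choose 14 : ℝ) * (β ^ 14)⁻¹ = (e:ℝ) * (((2 * Δ).choose 14 : ℝ) * (β ^ 14)⁻¹) := by
    rw [mul_assoc]
  linarith

/-- bad events -/
def Bad {V : Type*} [DecidableEq V] (G : SimpleGraph V) (c : Sym2 V → ℕ)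
    (p g : V → V) (Sp : V → V → Finset V) (b : Finset ((V × Bool) × V)) : Prop :=
  (#b = 2 ∧ Q1 G b) ∨ (#b = 2 ∧ Q2 G p g b) ∨ (#b = 2 ∧ Q3 G Sp b) ∨ (#b = 3 ∧ Q4 G c Sp b) ∨
    (#b = 4 ∧ Q5 G c b) ∨ (#b = 15 ∧ Q6 G b)

lemma select0 {V : Type*} [Fintype V] [DecidableEq V] [Nonempty V] (G : SimpleGraph V)
    [DecidableRel G.Adj] (Δ d : ℕ) (hΔ : ∀ v, G.degree v ≤ Δ) (h6 : 10 ^ 6 ≤ Δ)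
    (hd : 49 / 100 * (Δ:ℝ) ≤ d) (c : Sym2 V → ℕ) (hc : ProperEdgeColoring G c)
    (p g : V → V) (Sp : V → V → Finset V) :
    ∃ σ : V × Bool → V, (∀ i, d ≤ G.degree i.1 → G.Adj i.1 (σ i)) ∧
      ∀ b, Bad G c p g Sp b → (∀ q ∈ b, d ≤ G.degree q.1.1) → ¬ ∀ q ∈ b, σ q.1 = q.2 := by
  classical
  have h6' : (10:ℝ) ^ 6 ≤ Δ := by exact_mod_cast h6
  have hD : (0:ℝ) < Δ := by linarith [show (0:ℝ) < 10 ^ 6 by norm_num]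
  have hd0 : (0:ℝ) < d := by linarith
  have hnb : ∀ u, ∃ f : Fin Δ → V, ∀ w ∈ G.neighborFinset u, ∃ i, f i = w := fun u =>
    enum_exists _ _ (by rw [SimpleGraph.card_neighborFinset_eq_degree]; exact hΔ u)
  choose nb hnb using hnb
  have hnb : ∀ u w, G.Adj u w → ∃ n, nb u n = w := fun u w h => hnb u w (by simpa using h)
  have hsp : ∀ u v, ∃ f : Fin 17 → V, #(Sp u v) ≤ 17 → ∀ w ∈ Sp u v, ∃ n, f n = w := by
    intro u v
    by_cases h : #(Sp u v) ≤ 17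
    · obtain ⟨f, hf⟩ := enum_exists _ _ h
      exact ⟨f, fun _ => hf⟩
    · exact ⟨fun _ => u, fun h' => absurd h' h⟩
  choose sp hsp using hsp
  have hβ0 : 0 < 9 / 10 * (d:ℝ) := by positivity
  obtain ⟨σ, h1, h2⟩ := rosenfeld (Finset.univ.filter fun i : V × Bool => d ≤ G.degree i.1)
    (fun i => G.neighborFinset i.1)
    (Finset.univ.filter fun b : Finset ((V × Bool) × V) => Bad G c p g Sp b) (9 / 10 * (d:ℝ)) hβ0
    (by
      intro b hb
      rw [Finset.mem_filter] at hb
      rw [← Finset.card_pos]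
      rcases hb.2 with h | h | h | h | h | h <;> omega)
    (by
      intro i hi
      rw [Finset.mem_filter] at hi
      rw [SimpleGraph.card_neighborFinset_eq_degree]
      refine le_trans ?_ (arith Δ (G.degree i.1) d h6' hd (by exact_mod_cast hi.2))
      gcongr
      let S : (Finset ((V × Bool) × V) → Prop) → Finset (Finset ((V × Bool) × V)) := fun P =>
        Finset.univ.filter fun b => P b ∧ i ∈ b.image Prod.fst
      have hS : ∀ P b, b ∈ S P ↔ P b ∧ i ∈ b.image Prod.fst := by intro P b; simp [S]
      have hf : ∀ b : Finset ((V × Bool) × V), (0:ℝ) ≤ ((9 / 10 * (d:ℝ)) ^ (#b - 1))⁻¹ := by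
        intro b; positivity
      have hsub : (Finset.univ.filter fun b : Finset ((V × Bool) × V) => Bad G c p g Sp b).filter
          (fun b => i ∈ b.image Prod.fst) ⊆
          ((((S (fun b => #b = 2 ∧ Q1 G b) ∪ S (fun b => #b = 2 ∧ Q2 G p g b)) ∪
            S (fun b => #b = 2 ∧ Q3 G Sp b)) ∪ S (fun b => #b = 3 ∧ Q4 G c Sp b)) ∪
            S (fun b => #b = 4 ∧ Q5 G c b)) ∪ S (fun b => #b = 15 ∧ Q6 G b) := by
        intro b hb
        obtain ⟨hb1, hi'⟩ := Finset.mem_filter.1 hb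
        have hb2 := (Finset.mem_filter.1 hb1).2
        rw [Finset.mem_union, Finset.mem_union, Finset.mem_union, Finset.mem_union,
          Finset.mem_union]
        rcases hb2 with h | h | h | h | h | h
        · exact Or.inl (Or.inl (Or.inl (Or.inl (Or.inl ((hS _ _).2 ⟨h, hi'⟩)))))
        · exact Or.inl (Or.inl (Or.inl (Or.inl (Or.inr ((hS _ _).2 ⟨h, hi'⟩)))))
        · exact Or.inl (Or.inl (Or.inl (Or.inr ((hS _ _).2 ⟨h, hi'⟩))))
        · exact Or.inl (Or.inl (Or.inr ((hS _ _).2 ⟨h, hi'⟩)))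
        · exact Or.inl (Or.inr ((hS _ _).2 ⟨h, hi'⟩))
        · exact Or.inr ((hS _ _).2 ⟨h, hi'⟩)
      refine (Finset.sum_le_sum_of_subset_of_nonneg hsub fun b _ _ => hf b).trans ?_
      refine (sum_union_le' _ _ _ hf).trans (add_le_add ?_ ?_)
      · refine (sum_union_le' _ _ _ hf).trans (add_le_add ?_ ?_)
        · refine (sum_union_le' _ _ _ hf).trans (add_le_add ?_ ?_)
          · refine (sum_union_le' _ _ _ hf).trans (add_le_add ?_ ?_)
            · refine (sum_union_le' _ _ _ hf).trans (add_le_add ?_ ?_)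
              · exact sum_part _ 1 _ _ hβ0 (fun b hb => ((hS _ _).1 hb).1.1)
                  (count1 nb hnb i _ fun b hb => ⟨((hS _ _).1 hb).1.2, ((hS _ _).1 hb).2⟩)
              · exact sum_part _ 1 _ _ hβ0 (fun b hb => ((hS _ _).1 hb).1.1)
                  (count2 nb hnb i _ fun b hb => ⟨((hS _ _).1 hb).1.2, ((hS _ _).1 hb).2⟩)
            · exact sum_part _ 1 _ _ hβ0 (fun b hb => ((hS _ _).1 hb).1.1)
                (count3 nb hnb sp hsp i _ fun b hb => ⟨((hS _ _).1 hb).1.2, ((hS _ _).1 hb).2⟩)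
          · exact sum_part _ 2 _ _ hβ0 (fun b hb => ((hS _ _).1 hb).1.1)
              (count4 nb hnb sp hsp hc i _ fun b hb => ⟨((hS _ _).1 hb).1.2, ((hS _ _).1 hb).2⟩)
        · exact sum_part _ 3 _ _ hβ0 (fun b hb => ((hS _ _).1 hb).1.1)
            (count5 nb hnb hc i _ fun b hb => ⟨((hS _ _).1 hb).1.2, ((hS _ _).1 hb).2⟩)
      · exact sum_part _ 14 _ _ hβ0 (fun b hb => ((hS _ _).1 hb).1.1)
          (count6 hΔ i _ fun b hb => (hS _ _).1 hb))
  refine ⟨σ, fun i hi => ?_, fun b hb hq => ?_⟩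
  · have := h1 i (by simpa using hi)
    simpa using this
  · exact h2 b (by simpa using hb) (by simpa using hq)

end AVD

namespace AVD
open Finset

lemma select {V : Type*} [Fintype V] [DecidableEq V] [Nonempty V] (G : SimpleGraph V)
    [DecidableRel G.Adj] (Δ d : ℕ) (hΔ : ∀ v, G.degree v ≤ Δ) (h6 : 10 ^ 6 ≤ Δ)
    (hd : 49 / 100 * (Δ:ℝ) ≤ d) (c : Sym2 V → ℕ) (hc : ProperEdgeColoring G c)
    (p g : V → V) (Sp : V → V → Finset V) :
    ∃ σ : V × Bool → V, (∀ i, d ≤ G.degree i.1 → G.Adj i.1 (σ i)) ∧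
      (∀ u v j j', p u = v → p v = u → u ≠ v → G.Adj (g u) u → G.Adj (g v) v →
        d ≤ G.degree (g u) → d ≤ G.degree (g v) → σ (g u, j) = u → σ (g v, j') = v → False) ∧
      (∀ u v j, d ≤ G.degree u → G.Adj u v → #(Sp u v) ≤ 17 → σ (u, j) ∈ Sp u v →
        σ (u, !j) ∈ Sp u v → False) ∧
      (∀ u v j z a, d ≤ G.degree u → G.Adj u v → #(Sp u v) ≤ 17 → σ (u, j) ∈ Sp u v →
        d ≤ G.degree z → z ≠ u → Just G c u v (σ (u, !j)) z (σ (z, a)) → False) ∧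
      (∀ u v j z a z' a', d ≤ G.degree u → G.Adj u v →
        d ≤ G.degree z → z ≠ u → Just G c u v (σ (u, j)) z (σ (z, a)) →
        d ≤ G.degree z' → z' ≠ u → Just G c u v (σ (u, !j)) z' (σ (z', a')) → False) ∧
      ∀ w, #{i : V × Bool | d ≤ G.degree i.1 ∧ σ i = w} ≤ 14 := by
  classical
  obtain ⟨σ, h1, h2⟩ := select0 G Δ d hΔ h6 hd c hc p g Sp
  have hne : ∀ y, d ≤ G.degree y → σ (y, false) ≠ σ (y, true) := by
    intro y hy he
    refine h2 {((y, false), σ (y, false)), ((y, true), σ (y, false))}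
      (Or.inl ⟨Finset.card_pair (by simp), y, _, h1 (y, false) hy, rfl⟩) ?_ ?_
    · simp [hy]
    · simp [he]
  have hne' : ∀ y j, d ≤ G.degree y → σ (y, j) ≠ σ (y, !j) := by
    intro y j hy
    cases j
    · exact hne y hy
    · exact (hne y hy).symm
  refine ⟨σ, h1, ?_, ?_, ?_, ?_, ?_⟩
  · intro u v j j' hu hv huv hau hav hdu hdv e1 e2
    refine h2 {((g u, j), u), ((g v, j'), v)}
      (Or.inr (Or.inl ⟨Finset.card_pair (by simp [huv]), u, v, j, j', hu, hv, hau, hav, rfl⟩)) ?_ ?_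
    · simp [hdu, hdv]
    · simp [e1, e2]
  · intro u v j hu huv h17 hw hw'
    refine h2 {((u, j), σ (u, j)), ((u, !j), σ (u, !j))}
      (Or.inr (Or.inr (Or.inl ⟨Finset.card_pair (by simp), u, v, j, _, _, huv, h17, hw, hw', rfl⟩)))
      ?_ ?_
    · simp [hu]
    · simp
  · intro u v j z a hu huv h17 hw hz hzu hJ
    refine h2 {((u, j), σ (u, j)), ((u, !j), σ (u, !j)), ((z, a), σ (z, a))}
      (Or.inr (Or.inr (Or.inr (Or.inl ⟨?_, u, v, j, _, _, z, a, _, huv, h17, hw, hJ, rfl⟩)))) ?_ ?_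
    · rw [Finset.card_insert_of_notMem, Finset.card_pair]
      · simp [Ne.symm hzu]
      · simp [Ne.symm hzu]
    · simp [hu, hz]
    · simp
  · intro u v j z a z' a' hu huv hz hzu hJ hz' hzu' hJ'
    have hzz : (z, a) ≠ (z', a') := by
      intro he
      rw [he] at hJ
      rw [Prod.mk.injEq] at he
      rw [he.1] at hJ
      exact hne' u j hu (proper_inj hc hJ.1 hJ'.1 (hJ.2.2.2.symm.trans hJ'.2.2.2))
    refine h2 {((u, j), σ (u, j)), ((u, !j), σ (u, !j)), ((z, a), σ (z, a)), ((z', a'), σ (z', a'))}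
      (Or.inr (Or.inr (Or.inr (Or.inr (Or.inl
        ⟨?_, u, v, j, _, _, z, a, _, z', a', _, huv, hJ, hJ', rfl⟩))))) ?_ ?_
    · rw [Finset.card_insert_of_notMem, Finset.card_insert_of_notMem, Finset.card_pair]
      · intro he
        exact hzz (Prod.mk.inj he).1
      · simp [Ne.symm hzu, Ne.symm hzu']
      · simp [Ne.symm hzu, Ne.symm hzu']
    · simp [hu, hz, hz']
    · simp
  · intro w
    by_contra hlt
    push Not at hlt
    obtain ⟨s, hs, hs15⟩ := Finset.exists_subset_card_eq (Nat.succ_le_of_lt hlt)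
    have hs' : ∀ i ∈ s, d ≤ G.degree i.1 ∧ σ i = w := fun i hi => by simpa using hs hi
    refine h2 (s.image fun i => (i, w))
      (Or.inr (Or.inr (Or.inr (Or.inr (Or.inr ⟨?_, w, ?_⟩))))) ?_ ?_
    · rw [Finset.card_image_of_injective _ (fun a b h => (Prod.mk.inj h).1)]
      exact hs15
    · intro q hq
      obtain ⟨i, hi, rfl⟩ := Finset.mem_image.1 hq
      refine ⟨rfl, ?_⟩
      have := h1 i (hs' i hi).1
      rw [(hs' i hi).2] at this
      exact this
    · intro q hq
      obtain ⟨i, hi, rfl⟩ := Finset.mem_image.1 hq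
      exact (hs' i hi).1
    · intro q hq
      obtain ⟨i, hi, rfl⟩ := Finset.mem_image.1 hq
      exact (hs' i hi).2

end AVD

namespace AVD
open Finset

lemma main {V : Type*} [Fintype V] [DecidableEq V] [Nonempty V] (G : SimpleGraph V)
    [DecidableRel G.Adj] (Δ d : ℕ) (hΔ : ∀ v, G.degree v ≤ Δ) (h6 : 10 ^ 6 ≤ Δ)
    (hd : 49 / 100 * (Δ:ℝ) ≤ d) (hsm : ∀ v, G.degree v < d → 2 * G.degree v ≤ Δ)
    (hiso : ∀ u v : V, G.Adj u v → ¬(G.degree u = 1 ∧ G.degree v = 1)) :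
    ∃ c : Sym2 V → ℕ,
      ProperEdgeColoring G c ∧
      (∀ e ∈ G.edgeSet, c e < Δ + 19) ∧
      (∀ u v : V, G.Adj u v → d ≤ G.degree u → d ≤ G.degree v → colorSet G c u ≠ colorSet G c v) ∧
      (∀ u v : V, G.Adj u v → G.degree u < d → G.degree v < d →
        (∀ w : V, (G.Adj u w ∨ G.Adj v w) → w ≠ u → w ≠ v → d ≤ G.degree w) →
        colorSet G c u ≠ colorSet G c v) := by
  classical
  obtain ⟨c0, hc0, hc0k, hfr⟩ := base_col G Δ hΔ (fun y => d ≤ G.degree y)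
    (fun v hv => hsm v (not_le.1 hv))
  set p := pt G (fun y => d ≤ G.degree y) with hp
  have hg : ∀ u, ∃ x, (∃ x, G.Adj u x ∧ x ≠ p u) → G.Adj u x ∧ x ≠ p u := by
    intro u
    by_cases h : ∃ x, G.Adj u x ∧ x ≠ p u
    · exact ⟨h.choose, fun _ => h.choose_spec⟩
    · exact ⟨u, fun h' => absurd h' h⟩
  choose g hg using hg
  let Sp : V → V → Finset V := fun u v => Finset.univ.filter fun w =>
    G.Adj u w ∧ (w = v ∨ ∀ x, G.Adj v x → c0 s(v, x) ≠ c0 s(u, w))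
  have hSp : ∀ u v w, w ∈ Sp u v ↔
      G.Adj u w ∧ (w = v ∨ ∀ x, G.Adj v x → c0 s(v, x) ≠ c0 s(u, w)) := by
    intro u v w; simp [Sp]
  obtain ⟨σ, s1, s2, s3, s4, s5, s6⟩ := select G Δ d hΔ h6 hd c0 hc0 p g Sp
  let F : Finset (Sym2 V) := Finset.univ.filter fun e =>
    ∃ i : V × Bool, d ≤ G.degree i.1 ∧ s(i.1, σ i) = e
  have hF : ∀ e, e ∈ F ↔ ∃ i : V × Bool, d ≤ G.degree i.1 ∧ s(i.1, σ i) = e := by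
    intro e; simp [F]
  have hFe : ∀ e ∈ F, e ∈ G.edgeSet := by
    intro e he
    obtain ⟨i, hi, rfl⟩ := (hF e).1 he
    exact s1 i hi
  have hF16 : ∀ x, #{e ∈ F | x ∈ e} ≤ 16 := by
    intro x
    have hsub : {e ∈ F | x ∈ e} ⊆ (({(x, false), (x, true)} : Finset (V × Bool)) ∪
        Finset.univ.filter fun i : V × Bool => d ≤ G.degree i.1 ∧ σ i = x).image
        fun i => s(i.1, σ i) := by
      intro e he
      obtain ⟨he, hx⟩ := Finset.mem_filter.1 he
      obtain ⟨i, hi, rfl⟩ := (hF e).1 he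
      refine Finset.mem_image.2 ⟨i, ?_, rfl⟩
      rw [Finset.mem_union]
      rcases Sym2.mem_iff.1 hx with h | h
      · left
        obtain ⟨y, a⟩ := i
        have h : x = y := h
        rw [h]
        cases a <;> simp
      · right
        simp [hi, h]
    refine (Finset.card_le_card hsub).trans (Finset.card_image_le.trans
      ((Finset.card_union_le _ _).trans ?_))
    have := s6 x
    have h2 : #({(x, false), (x, true)} : Finset (V × Bool)) ≤ 2 := Finset.card_le_two
    omega
  have hid : ∀ e : Sym2 V, Sym2.map (id : V → V) e = e := fun e => by rw [Sym2.map_id]; rfl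
  obtain ⟨c', hc'k, hc'⟩ := merged F (id : V → V) 16 1 17
    (by
      intro e he
      rw [Sym2.map_id]
      exact SimpleGraph.not_isDiag_of_mem_edgeSet G (hFe e he))
    (by
      intro x
      simp only [hid]
      exact hF16 x)
    (by
      intro q
      rw [Finset.card_le_one]
      intro a ha b hb
      simp only [hid, Finset.mem_filter] at ha hb
      rw [ha.2, hb.2])
    (by norm_num)
  simp only [hid] at hc'
  let c : Sym2 V → ℕ := fun e => if e ∈ F then Δ + 2 + c' e else c0 e
  have hcF : ∀ e ∈ F, c e = Δ + 2 + c' e := fun e he => if_pos he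
  have hcN : ∀ e, e ∉ F → c e = c0 e := fun e he => if_neg he
  have key : ∀ u v w, colorSet G c u = colorSet G c v → G.Adj u w → s(u, w) ∉ F →
      ∃ x, G.Adj v x ∧ s(v, x) ∉ F ∧ c0 s(v, x) = c0 s(u, w) := by
    intro u v w he huw hw
    have h1 : c0 s(u, w) ∈ colorSet G c u := ⟨w, huw, hcN _ hw⟩
    rw [he] at h1
    obtain ⟨x, hvx, hx⟩ := h1
    have hxF : s(v, x) ∉ F := by
      intro hxF
      rw [hcF _ hxF] at hx
      have := hc0k s(u, w) huw
      omega
    exact ⟨x, hvx, hxF, by rw [← hx, hcN _ hxF]⟩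
  have hfrag : ∀ u v, Fr G (fun y => d ≤ G.degree y) u v → colorSet G c u = colorSet G c v →
      G.Adj u (g u) → g u ≠ v → s(u, g u) ∉ F → False := by
    intro u v hf he hgu hgv hgF
    obtain ⟨x, hvx, hxF, hx⟩ := key u v (g u) he hgu hgF
    by_cases hxu : x = u
    · subst hxu
      rw [Sym2.eq_swap] at hx
      exact hgv (proper_inj hc0 hvx.symm hgu hx).symm
    · exact hfr u v hf (g u) x hgu hgv hvx hxu hx.symm
  have hcp : ProperEdgeColoring G c := by
    intro e₁ h₁ e₂ h₂ hne hv
    by_cases f1 : e₁ ∈ F <;> by_cases f2 : e₂ ∈ F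
    · rw [hcF _ f1, hcF _ f2]
      have := hc' e₁ f1 e₂ f2 hne hv
      omega
    · rw [hcF _ f1, hcN _ f2]
      have := hc0k e₂ h₂
      omega
    · rw [hcN _ f1, hcF _ f2]
      have := hc0k e₁ h₁
      omega
    · rw [hcN _ f1, hcN _ f2]
      exact hc0 e₁ h₁ e₂ h₂ hne hv
  have hleaf : ∀ u v, G.Adj u v → colorSet G c u = colorSet G c v →
      (∀ x, G.Adj u x → x = v) → ∀ x, G.Adj v x → x = u := by
    intro u v huv he h x hvx
    have h1 : c s(v, x) ∈ colorSet G c v := ⟨x, hvx, rfl⟩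
    rw [← he] at h1
    obtain ⟨w, huw, hw⟩ := h1
    rw [h w huw, Sym2.eq_swap] at hw
    exact (proper_inj hcp huv.symm hvx hw).symm
  have hdeg1 : ∀ u v, G.Adj u v → (∀ x, G.Adj u x → x = v) → G.degree u = 1 := by
    intro u v huv h
    rw [SimpleGraph.degree_eq_one_iff_existsUnique_adj]
    exact ⟨v, huv, h⟩
  have hFg : ∀ u v, Fr G (fun y => d ≤ G.degree y) u v → ∀ x, s(u, x) ∈ F →
      ∃ j, σ (x, j) = u := by
    intro u v hf x hx
    obtain ⟨⟨z, a⟩, hz, hza⟩ := (hF _).1 hx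
    rw [Sym2.eq_iff] at hza
    rcases hza with h | h
    · have h1 : z = u := h.1
      rw [h1] at hz
      exact absurd hz hf.2.1
    · have h1 : z = x := h.1
      rw [h1] at h
      exact ⟨a, h.2⟩
  refine ⟨c, hcp, ?_, ?_, ?_⟩
  · intro e he
    by_cases f1 : e ∈ F
    · rw [hcF _ f1]
      have := hc'k e f1
      omega
    · rw [hcN _ f1]
      have := hc0k e he
      omega
  · intro u v huv hu hv he
    have h17 : #(Sp u v) ≤ 17 := by
      have hsub : (Sp u v).erase v ⊆ Finset.univ.filter fun w => s(u, w) ∈ F := by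
        intro w hw
        obtain ⟨hwv, hw⟩ := Finset.mem_erase.1 hw
        obtain ⟨huw, h | h⟩ := (hSp u v w).1 hw
        · exact absurd h hwv
        · rw [Finset.mem_filter]
          refine ⟨Finset.mem_univ _, ?_⟩
          by_contra hwF
          obtain ⟨x, hvx, _, hx⟩ := key u v w he huw hwF
          exact h x hvx hx
      have h2 : #(Finset.univ.filter fun w => s(u, w) ∈ F) ≤ #{e ∈ F | u ∈ e} := by
        refine Finset.card_le_card_of_injOn (fun w => s(u, w)) ?_ ?_
        · intro w hw
          have hw : s(u, w) ∈ F := by simpa using hw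
          simp [hw]
        · intro w _ w' _ hww
          exact Sym2.congr_right.1 hww
      have h3 := Finset.card_le_card hsub
      have h4 := hF16 u
      have h5 := Finset.pred_card_le_card_erase (s := Sp u v) (a := v)
      omega
    have hJ : ∀ j, σ (u, j) ∈ Sp u v ∨ ∃ z a, d ≤ G.degree z ∧ z ≠ u ∧
        Just G c0 u v (σ (u, j)) z (σ (z, a)) := by
      intro j
      by_cases hin : σ (u, j) ∈ Sp u v
      · exact Or.inl hin
      right
      have huw := s1 (u, j) hu
      simp only at huw
      rw [hSp] at hin
      push Not at hin
      obtain ⟨hwv, x, hvx, hx⟩ := hin huw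
      have hxF : s(v, x) ∈ F := by
        by_contra hxF
        obtain ⟨w, hw, hwF, hwc⟩ := key v u x he.symm hvx hxF
        have := proper_inj hc0 hw huw (hwc.trans hx)
        subst this
        exact hwF ((hF _).2 ⟨(u, j), hu, rfl⟩)
      have hxu : x ≠ u := by
        rintro rfl
        rw [Sym2.eq_swap] at hx
        exact hwv (proper_inj hc0 hvx.symm huw hx).symm
      obtain ⟨⟨z, a⟩, hz, hza⟩ := (hF _).1 hxF
      simp only at hz hza
      have hadj := s1 (z, a) hz
      refine ⟨z, a, hz, ?_, huw, hadj, ?_, by rw [hza, hx]⟩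
      · rintro rfl
        rw [Sym2.eq_iff] at hza
        rcases hza with h | h
        · exact huv.ne h.1
        · exact hxu h.1.symm
      · rw [Sym2.eq_iff] at hza
        tauto
    rcases hJ false with h | ⟨z, a, hz, hzu, h⟩ <;> rcases hJ true with h' | ⟨z', a', hz', hzu', h'⟩
    · exact s3 u v false hu huv h17 h h'
    · exact s4 u v false z' a' hu huv h17 h hz' hzu' h'
    · exact s4 u v true z a hu huv h17 h' hz hzu h
    · exact s5 u v false z a z' a' hu huv hz hzu h hz' hzu' h'
  · intro u v huv hu hv hN he
    have hf : Fr G (fun y => d ≤ G.degree y) u v := ⟨huv, not_le.2 hu, not_le.2 hv, hN⟩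
    have hpu : p u = v := pt_eq hf
    have hpv : p v = u := pt_eq hf.symm
    by_cases hu1 : ∀ x, G.Adj u x → x = v
    · exact hiso u v huv ⟨hdeg1 u v huv hu1, hdeg1 v u huv.symm (hleaf u v huv he hu1)⟩
    by_cases hv1 : ∀ x, G.Adj v x → x = u
    · exact hu1 (hleaf v u huv.symm he.symm hv1)
    push Not at hu1 hv1
    have gu := hg u (by rw [hpu]; exact hu1)
    have gv := hg v (by rw [hpv]; exact hv1)
    rw [hpu] at gu
    rw [hpv] at gv
    by_cases fu : s(u, g u) ∈ F
    · by_cases fv : s(v, g v) ∈ F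
      · obtain ⟨j, hj⟩ := hFg u v hf _ fu
        obtain ⟨j', hj'⟩ := hFg v u hf.symm _ fv
        exact s2 u v j j' hpu hpv huv.ne gu.1.symm gv.1.symm
          (hN _ (Or.inl gu.1) gu.1.ne.symm gu.2) (hN _ (Or.inr gv.1) gv.2 gv.1.ne.symm) hj hj'
      · exact hfrag v u hf.symm he.symm gv.1 gv.2 fv
    · exact hfrag u v hf he gu.1 gu.2 fu

end AVD

/-- There exist `ε ∈ (0, 1/2)` and an integer `Δ₀` such that every finite simple graph with
maximum degree `Δ ≥ Δ₀` and no isolated edge has a proper edge colouring with at most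
`Δ + 19` colours distinguishing (i) every pair of adjacent big vertices (degree at least
`d := ⌈(1/2 - ε)Δ⌉`), and (ii) every pair of adjacent small vertices all of whose other
neighbours are big. -/
theorem avd_big_and_fragile :
    ∃ ε : ℝ, 0 < ε ∧ ε < 1/2 ∧
      ∃ Δ₀ : ℤ, ∀ Δ : ℕ, Δ₀ ≤ (Δ : ℤ) →
        ∀ (V : Type) [Fintype V] [DecidableEq V] (G : SimpleGraph V) [DecidableRel G.Adj],
          G.maxDegree = Δ →
          (∀ u v : V, G.Adj u v → ¬(G.degree u = 1 ∧ G.degree v = 1)) →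
          ∃ c : Sym2 V → ℕ,
            ProperEdgeColoring G c ∧
            (∀ e ∈ G.edgeSet, c e < Δ + 19) ∧
            (∀ u v : V, G.Adj u v →
              ⌈((1:ℝ)/2 - ε) * Δ⌉₊ ≤ G.degree u → ⌈((1:ℝ)/2 - ε) * Δ⌉₊ ≤ G.degree v →
              colorSet G c u ≠ colorSet G c v) ∧
            (∀ u v : V, G.Adj u v →
              G.degree u < ⌈((1:ℝ)/2 - ε) * Δ⌉₊ → G.degree v < ⌈((1:ℝ)/2 - ε) * Δ⌉₊ →
              (∀ w : V, (G.Adj u w ∨ G.Adj v w) → w ≠ u → w ≠ v →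
                ⌈((1:ℝ)/2 - ε) * Δ⌉₊ ≤ G.degree w) →
              colorSet G c u ≠ colorSet G c v) := by
  refine ⟨1 / 100, by norm_num, by norm_num, 10 ^ 6, ?_⟩
  intro Δ hΔ V _ _ G _ hmax hiso
  have h6 : 10 ^ 6 ≤ Δ := by exact_mod_cast hΔ
  have hV : Nonempty V := by
    by_contra hV
    rw [not_nonempty_iff] at hV
    have : G.maxDegree = 0 := by
      simp [SimpleGraph.maxDegree]
    omega
  refine AVD.main G Δ _ (fun v => hmax ▸ G.degree_le_maxDegree v) h6 ?_ ?_ hiso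
  · refine le_trans (le_of_eq (by ring)) (Nat.le_ceil _)
  · intro v hv
    rw [Nat.lt_ceil] at hv
    have : ((2 * G.degree v : ℕ) : ℝ) ≤ Δ := by
      push_cast
      have : (0:ℝ) ≤ Δ := by positivity
      linarith
    exact_mod_cast this
end

section
/- There exist a real number ε with 0 < ε < 1/2 and an integer Δ₀ such that the following holds for every integer Δ ≥ Δ₀. Let G be a finite simple graph with maximum degree Δ, set d := ⌈(1/2 − ε)Δ⌉, and let A' be a set of vertices of G each of degree strictly less than d such that the induced subgraph G[A'] has no isolated edge. Then for every proper edge colouring c of G using at most Δ + 19 colours, there exists a proper edge colouring c' of G with the same set of colours that agrees with c on every edge not having both endpoints in A', and that satisfies S_{c'}(u) ≠ S_{c'}(v) for every edge uv of G with both endpoints in A'. -/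
/-- The degree of a vertex `u` in the subgraph of `G` induced by the vertex set `A`. -/
def inducedDegree {V : Type*} [DecidableEq V] (G : SimpleGraph V) [DecidableRel G.Adj]
    (A : Finset V) (u : V) : ℕ :=
  (A.filter (fun w => G.Adj u w)).card

open Classical in
/-- ordered pairs of adjacent vertices in `A` with the same colour set -/
noncomputable def badPairs {V : Type} [Fintype V] (G : SimpleGraph V) (A : Finset V)
    (c : Sym2 V → ℕ) : Finset (V × V) :=
  Finset.univ.filter (fun p => G.Adj p.1 p.2 ∧ p.1 ∈ A ∧ p.2 ∈ A ∧
    colorSet G c p.1 = colorSet G c p.2)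

theorem rsv_avoid {T S : Set ℕ} {b : ℕ} (hb : b ∉ T) (h : b ≠ sInf (S \ T)) :
    insert b T ≠ S := by
  intro hS
  apply h
  have : S \ T = {b} := by
    rw [← hS]; ext n; simp only [Set.mem_sdiff, Set.mem_insert_iff, Set.mem_singleton_iff]
    constructor
    · tauto
    · rintro rfl; exact ⟨Or.inl rfl, hb⟩
  rw [this]; simp

theorem rsv_upd_same {V : Type} [DecidableEq V] (G : SimpleGraph V) (c : Sym2 V → ℕ)
    (hc : ProperEdgeColoring G c) {u w : V} (huw : G.Adj u w) (b : ℕ) :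
    colorSet G (Function.update c s(u, w) b) u
      = insert b (colorSet G c u \ {c s(u, w)}) := by
  ext n
  simp only [colorSet, Set.mem_ofPred_eq, Set.mem_insert_iff, Set.mem_sdiff, Set.mem_singleton_iff]
  constructor
  · rintro ⟨x, hx, rfl⟩
    by_cases h : x = w
    · subst h; left; simp
    · have hne : s(u, x) ≠ s(u, w) := by
        intro h'; exact h (Sym2.congr_right.1 h')
      right
      rw [Function.update_of_ne hne]
      exact ⟨⟨x, hx, rfl⟩, hc _ hx _ huw hne ⟨u, by simp, by simp⟩⟩
  · rintro (rfl | ⟨⟨x, hx, rfl⟩, h⟩)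
    · exact ⟨w, huw, by simp⟩
    · refine ⟨x, hx, Function.update_of_ne ?_ _ _⟩
      intro h'; rw [h'] at h; exact h rfl

theorem rsv_upd_other {V : Type} [DecidableEq V] (G : SimpleGraph V) (c : Sym2 V → ℕ)
    {u w x : V} (hu : x ≠ u) (hw : x ≠ w) (b : ℕ) :
    colorSet G (Function.update c s(u, w) b) x = colorSet G c x := by
  ext n
  have : ∀ y, Function.update c s(u, w) b s(x, y) = c s(x, y) := by
    intro y
    apply Function.update_of_ne
    simp only [ne_eq, Sym2.eq_iff]; tauto
  simp only [colorSet, Set.mem_ofPred_eq, this]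

theorem rsv_step {V : Type} [Fintype V] [DecidableEq V] (G : SimpleGraph V) [DecidableRel G.Adj]
    (A : Finset V) (N : ℕ) (hd : ∀ a ∈ A, 4 * G.degree a < N)
    (c : Sym2 V → ℕ) (hc : ProperEdgeColoring G c) (hN : ∀ e ∈ G.edgeSet, c e < N)
    (u v w : V) (hu : u ∈ A) (hv : v ∈ A) (hw : w ∈ A) (huv : G.Adj u v) (huw : G.Adj u w)
    (hvw : v ≠ w) (hbad : colorSet G c u = colorSet G c v) :
    ∃ c' : Sym2 V → ℕ, ProperEdgeColoring G c' ∧ (∀ e ∈ G.edgeSet, c' e < N) ∧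
      (∀ u v : V, G.Adj u v → (u ∉ A ∨ v ∉ A) → c' s(u, v) = c s(u, v)) ∧
      (badPairs G A c').card < (badPairs G A c).card := by
  classical
  set a := c s(u, w) with ha
  set Tu := colorSet G c u \ {a} with hTu
  set Tw := colorSet G c w \ {a} with hTw
  let F : Finset ℕ :=
    ((G.neighborFinset u).image (fun x => c s(u, x)) ∪
      (G.neighborFinset w).image (fun x => c s(w, x))) ∪
    ((G.neighborFinset u).image (fun x => sInf (colorSet G c x \ Tu)) ∪
      (G.neighborFinset w).image (fun x => sInf (colorSet G c x \ Tw)))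
  have hF : F.card < (Finset.range N).card := by
    have h1 : F.card ≤ (G.degree u + G.degree w) + (G.degree u + G.degree w) := by
      refine (Finset.card_union_le _ _).trans (Nat.add_le_add ?_ ?_) <;>
      exact (Finset.card_union_le _ _).trans
        (Nat.add_le_add Finset.card_image_le Finset.card_image_le)
    have := hd u hu
    have := hd w hw
    rw [Finset.card_range]; omega
  obtain ⟨b, hbN, hbF⟩ := Finset.exists_mem_notMem_of_card_lt_card hF
  rw [Finset.mem_range] at hbN
  simp only [F, Finset.mem_union, Finset.mem_image, SimpleGraph.mem_neighborFinset, not_or,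
    not_exists, not_and] at hbF
  obtain ⟨⟨h1, h2⟩, h3, h4⟩ := hbF
  have hbu : b ∉ Tu := fun h => by obtain ⟨⟨x, hx, hx'⟩, _⟩ := h; exact h1 x hx hx'
  have hbw : b ∉ Tw := fun h => by obtain ⟨⟨x, hx, hx'⟩, _⟩ := h; exact h2 x hx hx'
  have hSu : colorSet G (Function.update c s(u, w) b) u = insert b Tu :=
    rsv_upd_same G c hc huw b
  have hSw : colorSet G (Function.update c s(u, w) b) w = insert b Tw := by
    have := rsv_upd_same G c hc huw.symm b
    rw [Sym2.eq_swap (a := w) (b := u)] at this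
    exact this
  have hSo : ∀ x, x ≠ u → x ≠ w →
      colorSet G (Function.update c s(u, w) b) x = colorSet G c x :=
    fun x hxu hxw => rsv_upd_other G c hxu hxw b
  have hnu : ∀ x, G.Adj u x → insert b Tu ≠ colorSet G c x :=
    fun x hx => rsv_avoid hbu (fun h => h3 x hx h.symm)
  have hnw : ∀ x, G.Adj w x → insert b Tw ≠ colorSet G c x :=
    fun x hx => rsv_avoid hbw (fun h => h4 x hx h.symm)
  have hau : a ∈ colorSet G c u := ⟨w, huw, rfl⟩
  have haw : a ∈ colorSet G c w := ⟨u, huw.symm, by rw [ha, Sym2.eq_swap]⟩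
  have hcanc : insert b Tu = insert b Tw → colorSet G c u = colorSet G c w := by
    intro h
    have hT : Tu = Tw := by
      ext n
      have := Set.ext_iff.1 h n
      simp only [Set.mem_insert_iff] at this
      by_cases hn : n = b
      · subst hn; tauto
      · tauto
    rw [← Set.insert_sdiff_self_of_mem hau, ← Set.insert_sdiff_self_of_mem haw, ← hTu, ← hTw, hT]
  have hkey : ∀ e ∈ G.edgeSet, e ≠ s(u, w) → (∃ x, x ∈ e ∧ x ∈ s(u, w)) → c e ≠ b := by
    rintro e he hne ⟨x, hx, hx'⟩
    obtain ⟨y, rfl⟩ := Sym2.mem_iff_exists.1 hx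
    rcases Sym2.mem_iff.1 hx' with rfl | rfl
    · exact h1 y he
    · exact h2 y he
  refine ⟨Function.update c s(u, w) b, ?_, ?_, ?_, ?_⟩
  · intro e₁ he₁ e₂ he₂ hne hx
    by_cases h₁ : e₁ = s(u, w)
    · have h₂ : e₂ ≠ s(u, w) := fun h => hne (h₁.trans h.symm)
      rw [Function.update_of_ne h₂, h₁, Function.update_self]
      obtain ⟨x, hx1, hx2⟩ := hx
      exact (hkey e₂ he₂ h₂ ⟨x, hx2, h₁ ▸ hx1⟩).symm
    · rw [Function.update_of_ne h₁]
      by_cases h₂ : e₂ = s(u, w)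
      · rw [h₂, Function.update_self]
        exact hkey e₁ he₁ h₁ (h₂ ▸ hx)
      · rw [Function.update_of_ne h₂]
        exact hc _ he₁ _ he₂ hne hx
  · intro e he
    by_cases h : e = s(u, w)
    · rw [h, Function.update_self]; exact hbN
    · rw [Function.update_of_ne h]; exact hN e he
  · intro x y _ hxy
    apply Function.update_of_ne
    intro h
    rcases Sym2.eq_iff.1 h with ⟨rfl, rfl⟩ | ⟨rfl, rfl⟩ <;> tauto
  · apply Finset.card_lt_card
    rw [Finset.ssubset_iff_of_subset]
    · refine ⟨(u, v), by simp [badPairs, huv, hu, hv, hbad], ?_⟩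
      simp only [badPairs, Finset.mem_filter, Finset.mem_univ, true_and, not_and]
      intro _ _ _
      rw [hSu, hSo v huv.ne' hvw]
      exact hnu v huv
    · rintro ⟨x, y⟩ hp
      simp only [badPairs, Finset.mem_filter, Finset.mem_univ, true_and] at hp ⊢
      obtain ⟨hxy, hx, hy, he⟩ := hp
      refine ⟨hxy, hx, hy, ?_⟩
      by_cases hxu : x = u
      · subst hxu
        by_cases hyw : y = w
        · subst hyw; rw [hSu, hSw] at he; exact hcanc he
        · rw [hSu, hSo y hxy.ne' hyw] at he; exact absurd he (hnu y hxy)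
      by_cases hxw : x = w
      · subst hxw
        by_cases hyu : y = u
        · subst hyu; rw [hSu, hSw] at he; exact (hcanc he.symm).symm
        · rw [hSw, hSo y hyu hxy.ne'] at he; exact absurd he (hnw y hxy)
      rw [hSo x hxu hxw] at he
      by_cases hyu : y = u
      · subst hyu; rw [hSu] at he; exact absurd he.symm (hnu x hxy.symm)
      by_cases hyw : y = w
      · subst hyw; rw [hSw] at he; exact absurd he.symm (hnw x hxy.symm)
      rwa [hSo y hyu hyw] at he

theorem rsv_main {V : Type} [Fintype V] [DecidableEq V] (G : SimpleGraph V) [DecidableRel G.Adj]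
    (A : Finset V) (N : ℕ) (hd : ∀ a ∈ A, 4 * G.degree a < N)
    (hiso : ∀ u ∈ A, ∀ v ∈ A, G.Adj u v →
              ¬(inducedDegree G A u = 1 ∧ inducedDegree G A v = 1)) (k : ℕ) :
    ∀ c : Sym2 V → ℕ, ProperEdgeColoring G c → (∀ e ∈ G.edgeSet, c e < N) →
      (badPairs G A c).card = k →
    ∃ c' : Sym2 V → ℕ, ProperEdgeColoring G c' ∧ (∀ e ∈ G.edgeSet, c' e < N) ∧
      (∀ u v : V, G.Adj u v → (u ∉ A ∨ v ∉ A) → c' s(u, v) = c s(u, v)) ∧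
      (∀ u v : V, G.Adj u v → u ∈ A → v ∈ A → colorSet G c' u ≠ colorSet G c' v) := by
  induction k using Nat.strong_induction_on with
  | _ k ih =>
    intro c hc hN hk
    by_cases hgood : ∀ u v : V, G.Adj u v → u ∈ A → v ∈ A → colorSet G c u ≠ colorSet G c v
    · exact ⟨c, hc, hN, fun _ _ _ _ => rfl, hgood⟩
    push Not at hgood
    obtain ⟨u, v, huv, hu, hv, hbad⟩ := hgood
    have hex : ∀ x y, y ∈ A → G.Adj x y → inducedDegree G A x ≠ 1 →
        ∃ w ∈ A, G.Adj x w ∧ y ≠ w := by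
      intro x y hy hxy hdeg
      by_contra hcon
      push Not at hcon
      apply hdeg
      unfold inducedDegree
      rw [Finset.card_eq_one]
      refine ⟨y, ?_⟩
      ext z
      simp only [Finset.mem_filter, Finset.mem_singleton]
      constructor
      · rintro ⟨hz, hxz⟩; exact (hcon z hz hxz).symm
      · rintro rfl; exact ⟨hy, hxy⟩
    have hstep : ∃ c' : Sym2 V → ℕ, ProperEdgeColoring G c' ∧ (∀ e ∈ G.edgeSet, c' e < N) ∧
      (∀ u v : V, G.Adj u v → (u ∉ A ∨ v ∉ A) → c' s(u, v) = c s(u, v)) ∧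
      (badPairs G A c').card < (badPairs G A c).card := by
      by_cases h1 : inducedDegree G A u = 1
      · have h2 : inducedDegree G A v ≠ 1 := fun h => hiso u hu v hv huv ⟨h1, h⟩
        obtain ⟨w, hw, hvw, hne⟩ := hex v u hu huv.symm h2
        exact rsv_step G A N hd c hc hN v u w hv hu hw huv.symm hvw hne hbad.symm
      · obtain ⟨w, hw, hvw, hne⟩ := hex u v hv huv h1
        exact rsv_step G A N hd c hc hN u v w hu hv hw huv hvw hne hbad
    obtain ⟨c₁, p1, p2, p3, p4⟩ := hstep
    obtain ⟨c₂, q1, q2, q3, q4⟩ := ih _ (hk ▸ p4) c₁ p1 p2 rfl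
    exact ⟨c₂, q1, q2, fun x y hxy h => (q3 x y hxy h).trans (p3 x y hxy h), q4⟩

/-- There exist `ε ∈ (0, 1/2)` and an integer `Δ₀` such that for every `Δ ≥ Δ₀`, every graph
`G` with maximum degree `Δ`, and every set `A'` of vertices of degree `< d := ⌈(1/2 - ε)Δ⌉`
whose induced subgraph `G[A']` has no isolated edge, every proper edge colouring of `G` with
at most `Δ + 19` colours can be modified, only on edges with both endpoints in `A'`, into a
proper edge colouring (with the same palette) distinguishing every edge inside `A'`. -/
theorem recolour_small_vertices :
    ∃ ε : ℝ, 0 < ε ∧ ε < 1/2 ∧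
      ∃ Δ₀ : ℤ, ∀ Δ : ℕ, Δ₀ ≤ (Δ : ℤ) →
        ∀ (V : Type) [Fintype V] [DecidableEq V] (G : SimpleGraph V) [DecidableRel G.Adj],
          G.maxDegree = Δ →
          ∀ A' : Finset V,
            (∀ a ∈ A', G.degree a < ⌈((1:ℝ)/2 - ε) * Δ⌉₊) →
            (∀ u ∈ A', ∀ v ∈ A', G.Adj u v →
              ¬(inducedDegree G A' u = 1 ∧ inducedDegree G A' v = 1)) →
            ∀ c : Sym2 V → ℕ,
              ProperEdgeColoring G c →
              (∀ e ∈ G.edgeSet, c e < Δ + 19) →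
              ∃ c' : Sym2 V → ℕ,
                ProperEdgeColoring G c' ∧
                (∀ e ∈ G.edgeSet, c' e < Δ + 19) ∧
                (∀ u v : V, G.Adj u v → (u ∉ A' ∨ v ∉ A') → c' s(u, v) = c s(u, v)) ∧
                (∀ u v : V, G.Adj u v → u ∈ A' → v ∈ A' →
                  colorSet G c' u ≠ colorSet G c' v) := by
  refine ⟨3/8, by norm_num, by norm_num, 0, ?_⟩
  intro Δ _ V _ _ G _ _ A' hdeg hiso c hc hN
  refine rsv_main G A' (Δ + 19) ?_ hiso _ c hc hN rfl
  intro x hx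
  have h := Nat.lt_ceil.1 (hdeg x hx)
  have h' : (4 * G.degree x : ℝ) < (Δ + 19 : ℝ) := by
    have : (0 : ℝ) ≤ Δ := Nat.cast_nonneg _
    linarith
  exact_mod_cast h'
end

section
/- Let φ(x) = 1 + Σ_{i=1}^{k} w_i x^{l_i}, where k ≥ 1, the w_i are positive real numbers, and the l_i are distinct positive integers. Suppose τ > 0 satisfies τ·φ'(τ) = φ(τ). Then for every real x > 0 with x·φ'(x)/φ(x) < 1, one has φ(τ)/τ < φ(x)/x. -/
theorem bern_le (t : ℝ) (ht : 0 < t) (n : ℕ) : 1 + (n : ℝ) * (t - 1) ≤ t ^ n := by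
  induction n with
  | zero => simp
  | succ n ih =>
    rw [pow_succ]
    push_cast
    have hn : (0 : ℝ) ≤ n := Nat.cast_nonneg n
    nlinarith [mul_le_mul_of_nonneg_right ih ht.le, mul_nonneg hn (sq_nonneg (t - 1))]

theorem bern_lt (t : ℝ) (ht : 0 < t) (h1 : t ≠ 1) (n : ℕ) (hn2 : 2 ≤ n) :
    1 + (n : ℝ) * (t - 1) < t ^ n := by
  obtain ⟨m, rfl⟩ : ∃ m, n = m + 1 := ⟨n - 1, by omega⟩
  have ih := bern_le t ht m
  rw [pow_succ]
  push_cast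
  have hm : (0 : ℝ) < m := by exact_mod_cast (by omega : 0 < m)
  have h2 : 0 < (t - 1) ^ 2 := by
    have : t - 1 ≠ 0 := sub_ne_zero.mpr h1
    positivity
  nlinarith [mul_le_mul_of_nonneg_right ih ht.le, mul_pos hm h2]

/-- Let `φ(x) = 1 + Σ wᵢ x^{lᵢ}` with positive weights and distinct positive exponents, and
let `τ > 0` satisfy `τ φ'(τ) = φ(τ)`. Then for every `x > 0` with `x φ'(x)/φ(x) < 1` we have
`φ(τ)/τ < φ(x)/x`. -/
theorem phi_ratio_lt (k : ℕ) (hk : 1 ≤ k) (w : Fin k → ℝ) (l : Fin k → ℕ)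
    (hw : ∀ i, 0 < w i) (hl : ∀ i, 1 ≤ l i) (hinj : Function.Injective l)
    (φ : ℝ → ℝ) (hφ : ∀ x, φ x = 1 + ∑ i, w i * x ^ l i)
    (τ : ℝ) (hτ : 0 < τ) (hτeq : τ * deriv φ τ = φ τ)
    (x : ℝ) (hx : 0 < x) (hlt : x * deriv φ x / φ x < 1) :
    φ τ / τ < φ x / x := by
  have hder : ∀ y, y * deriv φ y = ∑ i, w i * ((l i : ℝ) * y ^ l i) := by
    intro y
    have hfun : φ = fun x => 1 + ∑ i, w i * x ^ l i := funext hφ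
    have hd : HasDerivAt φ (∑ i, w i * ((l i : ℝ) * y ^ (l i - 1))) y := by
      rw [hfun]
      exact (HasDerivAt.fun_sum (fun i _ => (hasDerivAt_pow (l i) y).const_mul (w i))).const_add 1
    rw [hd.deriv, Finset.mul_sum]
    refine Finset.sum_congr rfl fun i _ => ?_
    obtain ⟨m, hm⟩ : ∃ m, l i = m + 1 := ⟨l i - 1, by have := hl i; omega⟩
    rw [hm, Nat.add_sub_cancel, pow_succ]
    ring
  have hpos : ∀ y, 0 < y → 0 < φ y := by
    intro y hy
    rw [hφ]
    have : 0 ≤ ∑ i, w i * y ^ l i :=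
      Finset.sum_nonneg fun i _ => mul_nonneg (hw i).le (pow_nonneg hy.le _)
    linarith
  have hne : x ≠ τ := by
    rintro rfl
    rw [hτeq, div_self (hpos x hx).ne'] at hlt
    exact lt_irrefl _ hlt
  have hS : ∑ i, w i * ((l i : ℝ) * τ ^ l i) = 1 + ∑ i, w i * τ ^ l i := by
    rw [← hder, hτeq, hφ]
  obtain ⟨j, hj⟩ : ∃ j, 2 ≤ l j := by
    by_contra hcon
    push Not at hcon
    have h1 : ∑ i, w i * ((l i : ℝ) * τ ^ l i) = ∑ i, w i * τ ^ l i := by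
      refine Finset.sum_congr rfl fun i _ => ?_
      have : l i = 1 := by
        have := hl i
        have := hcon i
        omega
      rw [this]
      simp
    linarith
  obtain ⟨t, rfl⟩ : ∃ t, x = t * τ := ⟨x / τ, by field_simp⟩
  have ht : 0 < t := pos_of_mul_pos_left hx hτ.le
  have ht1 : t ≠ 1 := by
    rintro rfl
    exact hne (one_mul τ)
  have key : ∑ i, w i * τ ^ l i * (1 + (l i : ℝ) * (t - 1)) < ∑ i, w i * τ ^ l i * t ^ l i := by
    refine Finset.sum_lt_sum (fun i _ => ?_) ⟨j, Finset.mem_univ j, ?_⟩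
    · exact mul_le_mul_of_nonneg_left (bern_le t ht _) (mul_pos (hw i) (pow_pos hτ _)).le
    · exact mul_lt_mul_of_pos_left (bern_lt t ht ht1 _ hj) (mul_pos (hw j) (pow_pos hτ _))
  have e1 : ∑ i, w i * τ ^ l i * (1 + (l i : ℝ) * (t - 1))
      = ∑ i, w i * τ ^ l i + (t - 1) * ∑ i, w i * ((l i : ℝ) * τ ^ l i) := by
    rw [Finset.mul_sum, ← Finset.sum_add_distrib]
    exact Finset.sum_congr rfl fun i _ => by ring
  have e2 : φ (t * τ) = 1 + ∑ i, w i * τ ^ l i * t ^ l i := by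
    rw [hφ]
    congr 1
    exact Finset.sum_congr rfl fun i _ => by rw [mul_pow]; ring
  have e3 : t * φ τ < φ (t * τ) := by
    rw [e2, hφ]
    rw [e1, hS] at key
    linarith
  rw [div_lt_div_iff₀ hτ hx]
  nlinarith [mul_lt_mul_of_pos_right e3 hτ]
end

section
/- Let φ(x) = 1 + Σ_{i=1}^{k} w_i x^{l_i}, where k ≥ 1, the w_i are positive real numbers, the l_i are distinct positive integers, and at least one l_i is at least 2. Then there exists exactly one real τ > 0 such that τ·φ'(τ) = φ(τ). -/
/-- Let `φ(x) = 1 + Σ wᵢ x^{lᵢ}` with positive weights and distinct positive exponents, at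
least one exponent being at least `2`. Then there is exactly one `τ > 0` with
`τ φ'(τ) = φ(τ)`. -/
theorem phi_unique_tau (k : ℕ) (hk : 1 ≤ k) (w : Fin k → ℝ) (l : Fin k → ℕ)
    (hw : ∀ i, 0 < w i) (hl : ∀ i, 1 ≤ l i) (hinj : Function.Injective l)
    (hl2 : ∃ i, 2 ≤ l i)
    (φ : ℝ → ℝ) (hφ : ∀ x, φ x = 1 + ∑ i, w i * x ^ l i) :
    ∃! τ : ℝ, 0 < τ ∧ τ * deriv φ τ = φ τ := by
  obtain ⟨j, hj⟩ := hl2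
  have hd : ∀ x, HasDerivAt φ (∑ i, w i * ((l i : ℝ) * x ^ (l i - 1))) x := by
    intro x
    have h1 : φ = fun x => 1 + ∑ i, w i * x ^ l i := funext hφ
    rw [h1]
    refine HasDerivAt.const_add 1 (HasDerivAt.fun_sum fun i _ => ?_)
    exact (hasDerivAt_pow (l i) x).const_mul (w i)
  set G : ℝ → ℝ := fun x => ∑ i, w i * ((l i : ℝ) - 1) * x ^ l i with hG
  have key : ∀ x, (x * deriv φ x = φ x ↔ G x = 1) := by
    intro x
    have h2 : x * deriv φ x = ∑ i, w i * (l i : ℝ) * x ^ l i := by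
      rw [(hd x).deriv, Finset.mul_sum]
      refine Finset.sum_congr rfl fun i _ => ?_
      have h3 : x ^ l i = x ^ (l i - 1) * x := by
        rw [← pow_succ, Nat.sub_add_cancel (hl i)]
      rw [h3]; ring
    have h4 : G x = ∑ i, w i * (l i : ℝ) * x ^ l i - ∑ i, w i * x ^ l i := by
      rw [hG, ← Finset.sum_sub_distrib]
      refine Finset.sum_congr rfl fun i _ => ?_
      ring
    rw [h2, hφ, h4]
    constructor <;> intro h <;> linarith
  have hc : ∀ i, 0 ≤ w i * ((l i : ℝ) - 1) := by
    intro i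
    have : (1 : ℝ) ≤ l i := by exact_mod_cast hl i
    exact mul_nonneg (hw i).le (by linarith)
  have hj2 : (2 : ℝ) ≤ l j := by exact_mod_cast hj
  have mono : ∀ x y, 0 ≤ x → x < y → G x < G y := by
    intro x y hx hxy
    refine Finset.sum_lt_sum (fun i _ => ?_) ⟨j, Finset.mem_univ _, ?_⟩
    · exact mul_le_mul_of_nonneg_left (pow_le_pow_left₀ hx hxy.le _) (hc i)
    · exact mul_lt_mul_of_pos_left (pow_lt_pow_left₀ hxy hx (by omega))
        (mul_pos (hw j) (by linarith))
  have h0 : G 0 = 0 := by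
    refine Finset.sum_eq_zero fun i _ => ?_
    rw [zero_pow (by have := hl i; omega), mul_zero]
  have hcont : Continuous G := by fun_prop
  set b : ℝ := 1 + 1 / w j with hb
  have hb1 : 1 ≤ b := by
    have : 0 < 1 / w j := one_div_pos.mpr (hw j)
    linarith
  have hGb : 1 ≤ G b := by
    have h5 : w j * ((l j : ℝ) - 1) * b ^ l j ≤ G b :=
      Finset.single_le_sum (f := fun i => w i * ((l i : ℝ) - 1) * b ^ l i)
        (fun i _ => mul_nonneg (hc i) (by positivity)) (Finset.mem_univ j)
    have h6 : b ≤ b ^ l j := le_self_pow₀ hb1 (by omega)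
    have h7 : w j * b = w j + 1 := by
      have := (hw j).ne'
      rw [hb]; field_simp
    have h8 : w j * 1 * b ≤ w j * ((l j : ℝ) - 1) * b ^ l j := by
      have := hw j
      apply mul_le_mul _ h6 (by linarith) (hc j)
      exact mul_le_mul_of_nonneg_left (by linarith) this.le
    have := hw j
    linarith
  obtain ⟨t, ht, hGt⟩ := intermediate_value_Icc (by linarith : (0 : ℝ) ≤ b) hcont.continuousOn
    (show (1 : ℝ) ∈ Set.Icc (G 0) (G b) from ⟨by rw [h0]; norm_num, hGb⟩)
  have htpos : 0 < t := by
    rcases ht.1.lt_or_eq with h | h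
    · exact h
    · rw [← h, h0] at hGt; norm_num at hGt
  refine ⟨t, ⟨htpos, (key t).2 hGt⟩, ?_⟩
  rintro y ⟨hy, hy2⟩
  have hGy := (key y).1 hy2
  rcases lt_trichotomy y t with h | h | h
  · have := mono y t hy.le h; linarith
  · exact h
  · have := mono t y htpos.le h; linarith
end

section
/- Let φ(x) = 1 + Σ_{i=1}^{k} w_i x^{l_i}, where k ≥ 1, the w_i are positive real numbers, and the l_i are distinct positive integers. Then the function x ↦ x·φ'(x)/φ(x) is strictly increasing on the interval (0, ∞). -/
lemma aux_pow (x y : ℝ) (hx : 0 < x) (hxy : x < y) (a b : ℕ) (h : b ≤ a) :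
    0 ≤ y ^ a * x ^ b - x ^ a * y ^ b := by
  obtain ⟨d, rfl⟩ := Nat.exists_eq_add_of_le h
  have h1 : x ^ d ≤ y ^ d := pow_le_pow_left₀ hx.le hxy.le d
  have hy : 0 < y := hx.trans hxy
  have h2 : 0 ≤ (x ^ b * y ^ b) * (y ^ d - x ^ d) :=
    mul_nonneg (by positivity) (by linarith)
  have : y ^ (b + d) * x ^ b - x ^ (b + d) * y ^ b = (x ^ b * y ^ b) * (y ^ d - x ^ d) := by ring
  rw [this]; exact h2

lemma aux_term (x y : ℝ) (hx : 0 < x) (hxy : x < y) (a b : ℕ) :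
    0 ≤ ((a : ℝ) - b) * (y ^ a * x ^ b - x ^ a * y ^ b) := by
  rcases le_total b a with h | h
  · have : (b : ℝ) ≤ a := by exact_mod_cast h
    exact mul_nonneg (by linarith) (aux_pow x y hx hxy a b h)
  · have : (a : ℝ) ≤ b := by exact_mod_cast h
    have h2 := aux_pow x y hx hxy b a h
    exact mul_nonneg_of_nonpos_of_nonpos (by linarith) (by linarith)

/-- Let `φ(x) = 1 + Σ wᵢ x^{lᵢ}` with positive weights and distinct positive exponents. Then
`x ↦ x φ'(x)/φ(x)` is strictly increasing on `(0, ∞)`. -/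
theorem phi_log_deriv_strict_mono (k : ℕ) (hk : 1 ≤ k) (w : Fin k → ℝ) (l : Fin k → ℕ)
    (hw : ∀ i, 0 < w i) (hl : ∀ i, 1 ≤ l i) (hinj : Function.Injective l)
    (φ : ℝ → ℝ) (hφ : ∀ x, φ x = 1 + ∑ i, w i * x ^ l i) :
    StrictMonoOn (fun x => x * deriv φ x / φ x) (Set.Ioi (0 : ℝ)) := by
  have hd : ∀ x, x * deriv φ x = ∑ i, w i * l i * x ^ l i := by
    intro x
    have h1 : HasDerivAt φ (∑ i, w i * (l i * x ^ (l i - 1))) x := by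
      have : φ = fun x => 1 + ∑ i, w i * x ^ l i := funext hφ
      rw [this]
      exact (HasDerivAt.fun_sum fun i _ => (hasDerivAt_pow (l i) x).const_mul (w i)).const_add 1
    rw [h1.deriv, Finset.mul_sum]
    refine Finset.sum_congr rfl fun i _ => ?_
    obtain ⟨m, hm⟩ := Nat.exists_eq_add_of_le (hl i)
    rw [hm, Nat.add_sub_cancel_left]
    ring
  have hpos : ∀ x, 0 < x → 0 < φ x := by
    intro x hx
    rw [hφ]
    have : 0 ≤ ∑ i, w i * x ^ l i :=
      Finset.sum_nonneg fun i _ => mul_nonneg (hw i).le (by positivity)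
    linarith
  intro x hx y hy hxy
  have hx : 0 < x := hx
  have hy : 0 < y := hy
  show x * deriv φ x / φ x < y * deriv φ y / φ y
  rw [div_lt_div_iff₀ (hpos x hx) (hpos y hy), hd, hd, hφ, hφ]
  have hA : ∑ i, w i * l i * x ^ l i < ∑ i, w i * l i * y ^ l i := by
    refine Finset.sum_lt_sum_of_nonempty ⟨⟨0, hk⟩, Finset.mem_univ _⟩ fun i _ => ?_
    have h1 : (0 : ℝ) < l i := by exact_mod_cast hl i
    have h2 := hw i
    have h3 : x ^ l i < y ^ l i := pow_lt_pow_left₀ hxy hx.le (by have := hl i; omega)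
    exact mul_lt_mul_of_pos_left h3 (by positivity)
  have e1 : (∑ i, w i * l i * y ^ l i) * (∑ j, w j * x ^ l j)
      - (∑ i, w i * l i * x ^ l i) * (∑ j, w j * y ^ l j)
      = ∑ i, ∑ j, w i * w j * (l i * (y ^ l i * x ^ l j - x ^ l i * y ^ l j)) := by
    rw [Finset.sum_mul_sum, Finset.sum_mul_sum, ← Finset.sum_sub_distrib]
    refine Finset.sum_congr rfl fun i _ => ?_
    rw [← Finset.sum_sub_distrib]
    exact Finset.sum_congr rfl fun j _ => by ring
  have e2 := Finset.sum_comm (s := Finset.univ) (t := Finset.univ)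
    (f := fun i j => w i * w j * (l i * (y ^ l i * x ^ l j - x ^ l i * y ^ l j)))
  have h2 : 0 ≤ ∑ i, ∑ j, w i * w j * (((l i : ℝ) - l j) * (y ^ l i * x ^ l j - x ^ l i * y ^ l j)) :=
    Finset.sum_nonneg fun i _ => Finset.sum_nonneg fun j _ =>
      mul_nonneg (mul_nonneg (hw i).le (hw j).le) (aux_term x y hx hxy _ _)
  have e3 : ∑ i, ∑ j, w i * w j * (((l i : ℝ) - l j) * (y ^ l i * x ^ l j - x ^ l i * y ^ l j))
      = ∑ i, ∑ j, w i * w j * (l i * (y ^ l i * x ^ l j - x ^ l i * y ^ l j))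
      + ∑ i, ∑ j, w j * w i * (l j * (y ^ l j * x ^ l i - x ^ l j * y ^ l i)) := by
    rw [← Finset.sum_add_distrib]
    refine Finset.sum_congr rfl fun i _ => ?_
    rw [← Finset.sum_add_distrib]
    exact Finset.sum_congr rfl fun j _ => by ring
  rw [e3, ← e2, ← e1] at h2
  linarith
end

section
/- For every sufficiently small real ε > 0 there exists an integer Δ₀ such that for every integer Δ ≥ Δ₀ the following holds. Set d := ⌈(1/2 − ε)Δ⌉ and define the real polynomial φ(x) := 1 + w₁x^{14} + w₂x² + w₃x³ + w₄x⁴ + w₅x⁵, where w₁ = C(Δ,13)·d^{15}, w₂ = 15·d³, w₃ = 2⁷·Δ³·C(d,2), w₄ = 2^{12}·Δ⁴·d·C(d,2), and w₅ = 2^{11}·Δ⁴·d²·C(d,2). Let τ be the unique positive real satisfying τ·φ'(τ) = φ(τ). Then φ(τ)/τ < C(d−13, 2) − 3d. -/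
lemma tangent_aux (n : ℕ) (x t : ℝ) (hx : 0 ≤ x) (ht : 0 ≤ t) :
    ((n : ℝ) + 1) * t ^ n * x ≤ x ^ (n + 1) + n * t ^ (n + 1) := by
  induction n with
  | zero => simp
  | succ n ih =>
    have h1 := mul_le_mul_of_nonneg_left ih hx
    have h2 : 0 ≤ ((n : ℝ) + 1) * t ^ n * (x - t) ^ 2 := by positivity
    push_cast
    have e : x ^ (n + 1 + 1) + ((n : ℝ) + 1) * t ^ (n + 1 + 1) - ((n : ℝ) + 1 + 1) * t ^ (n + 1) * x
      = (x * (x ^ (n + 1) + n * t ^ (n + 1)) - x * (((n : ℝ) + 1) * t ^ n * x))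
        + ((n : ℝ) + 1) * t ^ n * (x - t) ^ 2 := by ring
    linarith

lemma min_aux (a b c e f : ℝ) (ha : 0 ≤ a) (hb : 0 ≤ b) (hc : 0 ≤ c) (he : 0 ≤ e) (hf : 0 ≤ f)
    (φ : ℝ → ℝ)
    (h : ∀ x, φ x = 1 + a * x ^ 14 + b * x ^ 2 + c * x ^ 3 + e * x ^ 4 + f * x ^ 5)
    (t : ℝ) (ht : 0 < t) (hd : t * deriv φ t = φ t) (x : ℝ) (hx : 0 < x) :
    φ t / t ≤ 1 / x + a * x ^ 13 + b * x + c * x ^ 2 + e * x ^ 3 + f * x ^ 4 := by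
  have hder : HasDerivAt φ (a * (14 * t ^ 13) + b * (2 * t) + c * (3 * t ^ 2)
      + e * (4 * t ^ 3) + f * (5 * t ^ 4)) t := by
    have hφ : φ = fun x => 1 + a * x ^ 14 + b * x ^ 2 + c * x ^ 3 + e * x ^ 4 + f * x ^ 5 :=
      funext h
    rw [hφ]
    have := ((((((hasDerivAt_pow 14 t).const_mul a).const_add 1).add
      ((hasDerivAt_pow 2 t).const_mul b)).add ((hasDerivAt_pow 3 t).const_mul c)).add
      ((hasDerivAt_pow 4 t).const_mul e)).add ((hasDerivAt_pow 5 t).const_mul f)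
    exact this.congr_deriv (by norm_num)
  have hD := hder.deriv
  have hq : φ t / t = deriv φ t := by rw [← hd]; field_simp
  rw [hq]
  have h14 := mul_le_mul_of_nonneg_left (tangent_aux 13 x t hx.le ht.le) ha
  have h2 := mul_le_mul_of_nonneg_left (tangent_aux 1 x t hx.le ht.le) hb
  have h3 := mul_le_mul_of_nonneg_left (tangent_aux 2 x t hx.le ht.le) hc
  have h4 := mul_le_mul_of_nonneg_left (tangent_aux 3 x t hx.le ht.le) he
  have h5 := mul_le_mul_of_nonneg_left (tangent_aux 4 x t hx.le ht.le) hf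
  rw [h t, hD] at hd
  have key : deriv φ t * x ≤ 1 + a * x ^ 14 + b * x ^ 2 + c * x ^ 3 + e * x ^ 4 + f * x ^ 5 := by
    rw [hD]
    norm_num at h14 h2 h3 h4 h5
    linarith
  have e1 : 1 / x + a * x ^ 13 + b * x + c * x ^ 2 + e * x ^ 3 + f * x ^ 4
    = (1 + a * x ^ 14 + b * x ^ 2 + c * x ^ 3 + e * x ^ 4 + f * x ^ 5) / x := by
    field_simp
  rw [e1, le_div_iff₀ hx]
  exact key

/-- For every sufficiently small `ε > 0` there is `Δ₀` such that for all `Δ ≥ Δ₀`, setting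
`d := ⌈(1/2 - ε)Δ⌉` and `φ(x) := 1 + w₁x^{14} + w₂x² + w₃x³ + w₄x⁴ + w₅x⁵` with the weights
coming from the five bad events, any positive `τ` with `τ φ'(τ) = φ(τ)` satisfies
`φ(τ)/τ < C(d-13, 2) - 3d`. -/
theorem phi_tau_lt_s :
    ∃ ε₀ : ℝ, 0 < ε₀ ∧
      ∀ ε : ℝ, 0 < ε → ε < ε₀ →
        ∃ Δ₀ : ℕ, ∀ Δ : ℕ, Δ₀ ≤ Δ →
          ∀ d : ℕ, d = ⌈((1 : ℝ)/2 - ε) * (Δ : ℝ)⌉₊ →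
            ∀ φ : ℝ → ℝ,
              (∀ x : ℝ, φ x = 1 + (Nat.choose Δ 13 * d ^ 15 : ℕ) * x ^ 14
                  + (15 * d ^ 3 : ℕ) * x ^ 2
                  + (2 ^ 7 * Δ ^ 3 * Nat.choose d 2 : ℕ) * x ^ 3
                  + (2 ^ 12 * Δ ^ 4 * d * Nat.choose d 2 : ℕ) * x ^ 4
                  + (2 ^ 11 * Δ ^ 4 * d ^ 2 * Nat.choose d 2 : ℕ) * x ^ 5) →
              ∀ τ : ℝ, 0 < τ → τ * deriv φ τ = φ τ →
                φ τ / τ < (Nat.choose (d - 13) 2 : ℝ) - 3 * (d : ℝ) := by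
  refine ⟨1 / 1000, by norm_num, ?_⟩
  intro ε hε hε0
  obtain ⟨N, hN⟩ := exists_nat_ge (1 / ε)
  refine ⟨N + 10 ^ 9, ?_⟩
  intro Δ hΔ d hd φ hφ τ hτ hτd
  have hΔr : (N : ℝ) + 10 ^ 9 ≤ Δ := by exact_mod_cast hΔ
  have hN0 : (0 : ℝ) ≤ N := Nat.cast_nonneg N
  have hΔ9 : (10 : ℝ) ^ 9 ≤ Δ := by linarith
  have hΔ0 : (0 : ℝ) < Δ := by linarith [show (0 : ℝ) < 10 ^ 9 by norm_num]
  have hεΔ : 1 ≤ ε * Δ := by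
    have : 1 / ε ≤ Δ := by linarith [show (0 : ℝ) < 10 ^ 9 by norm_num]
    rw [div_le_iff₀ hε] at this
    linarith
  have hdlow : (499 / 1000 : ℝ) * Δ ≤ d := by
    have h1 : ((1 : ℝ) / 2 - ε) * Δ ≤ d := by rw [hd]; exact Nat.le_ceil _
    nlinarith
  have hdup : (d : ℝ) ≤ Δ / 2 := by
    have h1 : (d : ℝ) < ((1 : ℝ) / 2 - ε) * Δ + 1 := by
      rw [hd]
      apply Nat.ceil_lt_add_one
      apply mul_nonneg _ hΔ0.le
      linarith
    nlinarith
  have hd0 : (0 : ℝ) ≤ d := Nat.cast_nonneg d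
  have hd13 : 13 ≤ d := by
    have : (13 : ℝ) ≤ d := by linarith [show (13 : ℝ) ≤ 499 / 1000 * 10 ^ 9 by norm_num]
    exact_mod_cast this
  have hmin := min_aux _ _ _ _ _ (Nat.cast_nonneg _) (Nat.cast_nonneg _) (Nat.cast_nonneg _)
    (Nat.cast_nonneg _) (Nat.cast_nonneg _) φ hφ τ hτ hτd (9 / (Δ : ℝ) ^ 2) (by positivity)
  refine hmin.trans_lt ?_
  have hC : ((Nat.choose d 2 : ℕ) : ℝ) ≤ (Δ : ℝ) ^ 2 / 8 := by
    rw [Nat.cast_choose_two]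
    nlinarith
  have hC0 : (0 : ℝ) ≤ ((Nat.choose d 2 : ℕ) : ℝ) := Nat.cast_nonneg _
  have hC13 : ((Nat.choose Δ 13 : ℕ) : ℝ) ≤ (Δ : ℝ) ^ 13 / 6227020800 := by
    have := Nat.choose_le_pow_div (α := ℝ) 13 Δ
    simpa [Nat.factorial] using this
  have hR : (d : ℝ) ^ 2 / 2 - 17 * d ≤ (Nat.choose (d - 13) 2 : ℝ) - 3 * (d : ℝ) := by
    rw [Nat.cast_choose_two, Nat.cast_sub hd13]
    push_cast
    nlinarith
  push_cast
  generalize ((Nat.choose d 2 : ℕ) : ℝ) = c2 at *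
  generalize ((Nat.choose Δ 13 : ℕ) : ℝ) = c13 at *
  generalize (Nat.choose (d - 13) 2 : ℝ) = cR at *
  generalize (d : ℝ) = D at *
  generalize (Δ : ℝ) = M at *
  have t0 : 1 / (9 / M ^ 2) = M ^ 2 / 9 := by field_simp
  have t1 : c13 * D ^ 15 * (9 / M ^ 2) ^ 13 ≤ (125 / 10000) * M ^ 2 := by
    calc c13 * D ^ 15 * (9 / M ^ 2) ^ 13
        ≤ (M ^ 13 / 6227020800) * (M / 2) ^ 15 * (9 / M ^ 2) ^ 13 := by gcongr
      _ = (9 ^ 13 / (6227020800 * 2 ^ 15)) * M ^ 2 := by field_simp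
      _ ≤ _ := mul_le_mul_of_nonneg_right (by norm_num) (by positivity)
  have t2 : 15 * D ^ 3 * (9 / M ^ 2) ≤ 17 * M := by
    calc 15 * D ^ 3 * (9 / M ^ 2) ≤ 15 * (M / 2) ^ 3 * (9 / M ^ 2) := by gcongr
      _ = (135 / 8) * M := by field_simp; norm_num
      _ ≤ _ := by linarith
  have t3 : 2 ^ 7 * M ^ 3 * c2 * (9 / M ^ 2) ^ 2 ≤ 1296 * M := by
    calc 2 ^ 7 * M ^ 3 * c2 * (9 / M ^ 2) ^ 2
        ≤ 2 ^ 7 * M ^ 3 * (M ^ 2 / 8) * (9 / M ^ 2) ^ 2 := by gcongr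
      _ = 1296 * M := by field_simp; norm_num
  have t4 : 2 ^ 12 * M ^ 4 * D * c2 * (9 / M ^ 2) ^ 3 ≤ 186624 * M := by
    calc 2 ^ 12 * M ^ 4 * D * c2 * (9 / M ^ 2) ^ 3
        ≤ 2 ^ 12 * M ^ 4 * (M / 2) * (M ^ 2 / 8) * (9 / M ^ 2) ^ 3 := by gcongr
      _ = 186624 * M := by field_simp; norm_num
  have t5 : 2 ^ 11 * M ^ 4 * D ^ 2 * c2 * (9 / M ^ 2) ^ 4 ≤ 419904 := by
    calc 2 ^ 11 * M ^ 4 * D ^ 2 * c2 * (9 / M ^ 2) ^ 4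
        ≤ 2 ^ 11 * M ^ 4 * (M / 2) ^ 2 * (M ^ 2 / 8) * (9 / M ^ 2) ^ 4 := by gcongr
      _ = 419904 := by field_simp; norm_num
  have hsq : (499 / 1000 * M) ^ 2 ≤ D ^ 2 := by gcongr
  have hMM : 10 ^ 9 * M ≤ M ^ 2 := by nlinarith
  rw [t0]
  norm_num at *
  nlinarith
end

section
/- For every integer t ≥ 0, the number of partial Dyck words with exactly t zeros in which every descent has length exactly 2 is at most 2 · 4^t. -/
/-- Every prefix of `w` has at least as many zeros (`false`) as ones (`true`). -/
def DyckPrefixCond (w : List Bool) : Prop :=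
  ∀ p : List Bool, p <+: w → p.count true ≤ p.count false

/-- `MaxTrueRun w i m` means that the positions `i, i+1, …, i+m-1` of `w` form a maximal run
of consecutive ones (`true`), i.e. a descent of length `m` starting at position `i`. -/
def MaxTrueRun (w : List Bool) (i m : ℕ) : Prop :=
  0 < m ∧ i + m ≤ w.length ∧
  (∀ j : ℕ, i ≤ j → j < i + m → w[j]? = some true) ∧
  (i = 0 ∨ w[i - 1]? = some false) ∧
  (i + m = w.length ∨ w[i + m]? = some false)

theorem words_le_aux (n : ℕ) : {l : List Bool | l.length ≤ n}.Finite ∧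
    Set.ncard {l : List Bool | l.length ≤ n} + 1 ≤ 2 ^ (n + 1) := by
  induction n with
  | zero =>
    have h : {l : List Bool | l.length ≤ 0} = {[]} := by
      ext l; simp
    rw [h]; simp
  | succ n ih =>
    obtain ⟨hf, hc⟩ := ih
    have h : {l : List Bool | l.length ≤ n + 1} =
        insert [] ((List.cons true '' {l : List Bool | l.length ≤ n}) ∪
          (List.cons false '' {l : List Bool | l.length ≤ n})) := by
      ext l
      rcases l with _ | ⟨b, l⟩
      · simp
      · cases b <;> simp
    rw [h]
    refine ⟨((hf.image _).union (hf.image _)).insert _, ?_⟩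
    have h1 := Set.ncard_insert_le ([] : List Bool)
      ((List.cons true '' {l : List Bool | l.length ≤ n}) ∪
          (List.cons false '' {l : List Bool | l.length ≤ n}))
    have h2 := Set.ncard_union_le (List.cons true '' {l : List Bool | l.length ≤ n})
          (List.cons false '' {l : List Bool | l.length ≤ n})
    have h3 := Set.ncard_image_le (f := List.cons true) hf
    have h4 := Set.ncard_image_le (f := List.cons false) hf
    rw [pow_succ]
    omega

/-- For every `t ≥ 0`, the number of partial Dyck words with exactly `t` zeros in which every
descent has length exactly `2` is at most `2 · 4^t`. -/
theorem count_partial_dyck_descents_two (t : ℕ) :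
    Set.ncard {w : List Bool |
        w.count false = t ∧ w.count true ≤ t ∧ DyckPrefixCond w ∧
        (∀ i m : ℕ, MaxTrueRun w i m → m = 2)} ≤ 2 * 4 ^ t := by
  obtain ⟨hf, hc⟩ := words_le_aux (2 * t)
  have h : (2 : ℕ) ^ (2 * t + 1) = 2 * 4 ^ t := by
    rw [pow_succ, pow_mul]; norm_num [mul_comm]
  rw [h] at hc
  refine le_trans (Set.ncard_le_ncard ?_ hf) (by omega)
  rintro w ⟨h0, h1, -, -⟩
  have := List.count_true_add_count_false w
  simp only [Set.mem_ofPred_eq]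
  omega
end

section
/- For all positive integers t and m, the number of pairs (W, f), where W is a partial Dyck word with exactly t zeros in which every descent has length exactly 2, and f is a function assigning to each descent of W an integer in {1, …, m}, is at most 2 · 4^t · m^{⌊t/2⌋}. -/
theorem card_true_pos (w : List Bool) :
    ((Finset.range w.length).filter (fun j => w[j]? = some true)).card = w.count true := by
  induction w using List.reverseRecOn with
  | nil => simp
  | append_singleton w b ih =>
    have h : (Finset.range w.length).filter (fun j => (w ++ [b])[j]? = some true)
        = (Finset.range w.length).filter (fun j => w[j]? = some true) := by
      apply Finset.filter_congr
      intro j hj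
      rw [List.getElem?_append_left (Finset.mem_range.1 hj)]
    rw [List.length_append, List.length_singleton, Finset.range_add_one, Finset.filter_insert, h,
      List.count_append, ← ih]
    cases b <;> simp

open Classical in
noncomputable def descStarts (w : List Bool) : Finset ℕ :=
  (Finset.range w.length).filter (fun i => ∃ l, MaxTrueRun w i l)

open Classical in
theorem mem_descStarts (w : List Bool) (i : ℕ) :
    i ∈ descStarts w ↔ ∃ l, MaxTrueRun w i l := by
  unfold descStarts
  rw [Finset.mem_filter, Finset.mem_range]
  constructor
  · exact fun h => h.2
  · rintro ⟨l, h⟩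
    refine ⟨?_, l, h⟩
    have h1 := h.1
    have h2 := h.2.1
    omega

theorem descStarts_card (w : List Bool) (h : ∀ i l : ℕ, MaxTrueRun w i l → l = 2) :
    2 * (descStarts w).card ≤ w.count true := by
  rw [← card_true_pos]
  have key : ∀ i ∈ descStarts w, i + 2 ≤ w.length ∧ w[i]? = some true ∧ w[i+1]? = some true ∧
      (i = 0 ∨ w[i - 1]? = some false) := by
    intro i hi
    obtain ⟨l, hl⟩ := (mem_descStarts w i).1 hi
    have := h i l hl
    subst this
    exact ⟨hl.2.1, hl.2.2.1 i (by omega) (by omega), hl.2.2.1 (i+1) (by omega) (by omega),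
      hl.2.2.2.1⟩
  have hd : Disjoint (descStarts w) ((descStarts w).image (· + 1)) := by
    rw [Finset.disjoint_left]
    intro i hi hi'
    obtain ⟨j, hj, rfl⟩ := Finset.mem_image.1 hi'
    have h1 := (key _ hi).2.2.2
    have h2 := (key _ hj).2.1
    simp [h2] at h1
  have hc : ((descStarts w).image (· + 1)).card = (descStarts w).card :=
    Finset.card_image_of_injective _ (add_left_injective 1)
  have := Finset.card_union_of_disjoint hd
  rw [hc, ← two_mul] at this
  rw [← this]
  apply Finset.card_le_card
  intro i hi
  rw [Finset.mem_filter, Finset.mem_range]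
  rcases Finset.mem_union.1 hi with hi | hi
  · have := key _ hi
    exact ⟨by omega, this.2.1⟩
  · obtain ⟨j, hj, rfl⟩ := Finset.mem_image.1 hi
    have := key _ hj
    exact ⟨by omega, this.2.2.1⟩

def wordsUpTo (N : ℕ) : Finset (List Bool) :=
  (Finset.range N).biUnion fun n => (Finset.univ : Finset (List.Vector Bool n)).image fun v => v.toList

theorem mem_wordsUpTo (N : ℕ) (w : List Bool) (h : w.length < N) : w ∈ wordsUpTo N := by
  unfold wordsUpTo
  rw [Finset.mem_biUnion]
  exact ⟨w.length, Finset.mem_range.2 h, Finset.mem_image.2 ⟨(⟨w, rfl⟩ : List.Vector Bool w.length), Finset.mem_univ _, rfl⟩⟩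

theorem card_wordsUpTo (N : ℕ) : (wordsUpTo N).card ≤ 2 ^ N := by
  unfold wordsUpTo
  refine Finset.card_biUnion_le.trans ?_
  calc _ ≤ ∑ n ∈ Finset.range N, 2 ^ n := by
        apply Finset.sum_le_sum
        intro n _
        refine Finset.card_image_le.trans ?_
        rw [Finset.card_univ, card_vector, Fintype.card_bool]
    _ ≤ 2 ^ N := by
        have := Nat.geomSum_eq (le_refl 2) N
        rw [this]; simp

open Classical in
noncomputable def labels (m : ℕ) (S : Finset ℕ) : Finset (ℕ → ℕ) :=
  (S.pi fun _ => Finset.Icc 1 m).image fun g i => if h : i ∈ S then g i h else 0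

open Classical in
theorem card_labels (m : ℕ) (S : Finset ℕ) : (labels m S).card ≤ m ^ S.card := by
  unfold labels
  refine Finset.card_image_le.trans ?_
  simp [Finset.card_pi]

open Classical in
theorem mem_labels (m : ℕ) (S : Finset ℕ) (f : ℕ → ℕ) (h1 : ∀ i ∈ S, f i ∈ Finset.Icc 1 m)
    (h2 : ∀ i ∉ S, f i = 0) : f ∈ labels m S := by
  unfold labels
  refine Finset.mem_image.2 ⟨fun i _ => f i, Finset.mem_pi.2 h1, ?_⟩
  funext i
  by_cases h : i ∈ S
  · simp [h]
  · simp [h, h2 i h]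

/-- For positive integers `t` and `m`, the number of pairs `(W, f)`, where `W` is a partial
Dyck word with exactly `t` zeros whose descents all have length `2`, and `f` assigns to each
descent of `W` (identified with its starting position) an integer in `{1, …, m}` (and `0`
elsewhere), is at most `2 · 4^t · m^⌊t/2⌋`. -/
theorem count_weighted_partial_dyck (t m : ℕ) (ht : 0 < t) (hm : 0 < m) :
    Set.ncard {p : List Bool × (ℕ → ℕ) |
        p.1.count false = t ∧ p.1.count true ≤ t ∧ DyckPrefixCond p.1 ∧
        (∀ i l : ℕ, MaxTrueRun p.1 i l → l = 2) ∧
        (∀ i : ℕ, (∃ l : ℕ, MaxTrueRun p.1 i l) → p.2 i ∈ Finset.Icc 1 m) ∧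
        (∀ i : ℕ, (¬ ∃ l : ℕ, MaxTrueRun p.1 i l) → p.2 i = 0)} ≤
      2 * 4 ^ t * m ^ (t / 2) := by
  classical
  let A : Finset (List Bool) := (wordsUpTo (2 * t + 1)).filter
    (fun w => 2 * (descStarts w).card ≤ t)
  let B : Finset (List Bool × (ℕ → ℕ)) :=
    A.biUnion fun w => (labels m (descStarts w)).image fun f => (w, f)
  have hB : B.card ≤ 2 * 4 ^ t * m ^ (t / 2) := by
    refine Finset.card_biUnion_le.trans ?_
    calc _ ≤ ∑ w ∈ A, m ^ (t / 2) := by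
          apply Finset.sum_le_sum
          intro w hw
          refine Finset.card_image_le.trans ((card_labels _ _).trans ?_)
          have := (Finset.mem_filter.1 hw).2
          exact Nat.pow_le_pow_right hm (by omega)
      _ = A.card * m ^ (t / 2) := by rw [Finset.sum_const, smul_eq_mul]
      _ ≤ _ := by
          apply Nat.mul_le_mul_right
          refine (Finset.card_filter_le _ _).trans ((card_wordsUpTo _).trans ?_)
          rw [pow_succ, pow_mul, mul_comm]
          norm_num
  refine le_trans ?_ hB
  rw [← Set.ncard_coe_finset]
  refine Set.ncard_le_ncard ?_ (Finset.finite_toSet _)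
  rintro ⟨w, f⟩ ⟨h1, h2, -, h4, h5, h6⟩
  dsimp only at h1 h2 h4 h5 h6
  refine Finset.mem_coe.2 (Finset.mem_biUnion.2 ⟨w, Finset.mem_filter.2 ⟨?_, ?_⟩,
    Finset.mem_image.2 ⟨f, ?_, rfl⟩⟩)
  · apply mem_wordsUpTo
    have := List.count_true_add_count_false w
    omega
  · exact (descStarts_card w h4).trans h2
  · apply mem_labels
    · intro i hi
      exact h5 i ((mem_descStarts w i).1 hi)
    · intro i hi
      exact h6 i (fun h => hi ((mem_descStarts w i).2 h))
end

section
/- For every sufficiently small real ε > 0 there exists an integer Δ₀ such that for every integer Δ ≥ Δ₀ the following holds. Set d := ⌈(1/2 − ε)Δ⌉, s := C(d−13, 2) − 3d, w₁ := C(Δ,13)·d^{15}, w₂ := 15·d³, w₃ := 2⁷·Δ³·C(d,2), w₄ := 2^{12}·Δ⁴·d·C(d,2), w₅ := 2^{11}·Δ⁴·d²·C(d,2). For each integer t ≥ 1, let C_t be the number of pairs (W, f), where W is a Dyck word of semilength t all of whose descents have length in {2, 3, 4, 5, 14}, and f assigns to each descent of W of length 2, 3, 4, 5, 14 an integer in {1,…,w₂},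 {1,…,w₃}, {1,…,w₄}, {1,…,w₅}, {1,…,w₁}, respectively. Then C_t / s^t tends to 0 as t tends to infinity. -/
/-- A Dyck word of semilength `m`: exactly `m` zeros, exactly `m` ones, and every prefix has
at least as many zeros as ones. -/
def IsDyckWord (m : ℕ) (w : List Bool) : Prop :=
  w.count false = m ∧ w.count true = m ∧ DyckPrefixCond w

def wdWord : List (Σ _ : ℕ, ℕ) → List Bool
  | [] => []
  | x :: L => (false :: List.replicate x.1 true) ++ wdWord L

def wdFun : List (Σ _ : ℕ, ℕ) → ℕ → ℕ
  | [] => fun _ => 0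
  | x :: L => fun i => if i < x.1 + 1 then (if i = 1 then x.2 else 0) else wdFun L (i - (x.1 + 1))

def wdA (weight : ℕ → ℕ) : Finset (Σ _ : ℕ, ℕ) :=
  Finset.sigma {0, 2, 3, 4, 5, 14} (fun l => if l = 0 then {0} else Finset.Icc 1 (weight l))

lemma wd_split (w : List Bool) : ∃ (l : ℕ) (w' : List Bool),
    w = List.replicate l true ++ w' ∧ w'[0]? ≠ some true := by
  induction w with
  | nil => exact ⟨0, [], by simp⟩
  | cons b w ih =>
    cases b with
    | false => exact ⟨0, false :: w, by simp⟩
    | true =>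
      obtain ⟨l, w', h, h'⟩ := ih
      exact ⟨l + 1, w', by simp [List.replicate_succ, h], h'⟩

lemma wd_get_hi (l : ℕ) (w' : List Bool) (i : ℕ) :
    ((false :: List.replicate l true) ++ w')[i + (l + 1)]? = w'[i]? := by
  rw [List.getElem?_append_right (by simp)]
  simp

lemma wd_get_lo (l : ℕ) (w' : List Bool) (i : ℕ) (h : 1 ≤ i) (hi : i < l + 1) :
    ((false :: List.replicate l true) ++ w')[i]? = some true := by
  rw [List.getElem?_append_left (by simpa using hi)]
  obtain ⟨k, rfl⟩ := Nat.exists_eq_add_of_le' h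
  have : k < l := by omega
  simp [this]

lemma wd_run_shift (l : ℕ) (w' : List Bool) (h0 : w'[0]? ≠ some true) (i m : ℕ) :
    MaxTrueRun ((false :: List.replicate l true) ++ w') (i + (l + 1)) m ↔ MaxTrueRun w' i m := by
  have hlen : ((false :: List.replicate l true) ++ w').length = w'.length + (l + 1) := by
    simp; omega
  have key := wd_get_hi l w'
  generalize ((false :: List.replicate l true) ++ w') = w at *
  have hi0 : ∀ m, 0 < m → (∀ j : ℕ, i ≤ j → j < i + m → w'[j]? = some true) → 1 ≤ i := by
    intro m hm h
    by_contra hi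
    have : i = 0 := by omega
    subst this
    exact h0 (h 0 le_rfl (by omega))
  constructor
  · rintro ⟨hm, hle, hr, hl, hrr⟩
    have hr' : ∀ j : ℕ, i ≤ j → j < i + m → w'[j]? = some true := by
      intro j h1 h2
      rw [← key]; exact hr _ (by omega) (by omega)
    have hi := hi0 m hm hr'
    refine ⟨hm, by omega, hr', ?_, ?_⟩
    · right
      rw [← key]
      rcases hl with hl | hl
      · omega
      · rw [show i - 1 + (l + 1) = i + (l + 1) - 1 by omega]; exact hl
    · rcases hrr with h | h
      · left; omega
      · right; rw [← key, show i + m + (l + 1) = i + (l + 1) + m by omega]; exact h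
  · rintro ⟨hm, hle, hr, hl, hrr⟩
    have hi := hi0 m hm hr
    refine ⟨hm, by omega, ?_, ?_, ?_⟩
    · intro j h1 h2
      have := hr (j - (l + 1)) (by omega) (by omega)
      rw [← key, show j - (l + 1) + (l + 1) = j by omega] at this
      exact this
    · right
      rcases hl with hl | hl
      · omega
      · rw [← key, show i - 1 + (l + 1) = i + (l + 1) - 1 by omega] at hl; exact hl
    · rcases hrr with h | h
      · left; omega
      · right; rw [← key, show i + m + (l + 1) = i + (l + 1) + m by omega] at h; exact h

lemma wd_run_first (l : ℕ) (w' : List Bool) (h0 : w'[0]? ≠ some true) (hl : 0 < l) :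
    MaxTrueRun ((false :: List.replicate l true) ++ w') 1 l := by
  refine ⟨hl, by simp; omega, fun j h1 h2 => wd_get_lo l w' j h1 (by omega), Or.inr (by simp), ?_⟩
  have := wd_get_hi l w' 0
  rw [show 0 + (l + 1) = 1 + l by omega] at this
  rw [this]
  cases w' with
  | nil => left; simp; omega
  | cons b w' =>
    right
    cases b
    · simp
    · simp at h0

lemma wd_run_lo (l : ℕ) (w' : List Bool) (i m : ℕ) (hi : i < l + 1)
    (h : MaxTrueRun ((false :: List.replicate l true) ++ w') i m) : i = 1 := by
  obtain ⟨hm, hle, hr, hl, hrr⟩ := h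
  rcases hl with rfl | hl
  · have := hr 0 le_rfl (by omega)
    simp at this
  · by_contra hne
    by_cases h0 : i = 0
    · subst h0
      have := hr 0 le_rfl (by omega)
      simp at this
    · rw [wd_get_lo l w' (i - 1) (by omega) (by omega)] at hl
      simp at hl

lemma wd_exists (weight : ℕ → ℕ) : ∀ (n : ℕ) (w : List Bool) (f : ℕ → ℕ), w.length ≤ n →
    w[0]? ≠ some true →
    (∀ i l : ℕ, MaxTrueRun w i l → l ∈ ({2, 3, 4, 5, 14} : Set ℕ)) →
    (∀ i l : ℕ, MaxTrueRun w i l → f i ∈ Finset.Icc 1 (weight l)) →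
    (∀ i : ℕ, (¬ ∃ l : ℕ, MaxTrueRun w i l) → f i = 0) →
    ∃ L : List (Σ _ : ℕ, ℕ), (∀ x ∈ L, x ∈ wdA weight) ∧ wdWord L = w ∧ wdFun L = f := by
  intro n
  induction n with
  | zero =>
    intro w f hn _ _ _ h3
    have : w = [] := by simpa using hn
    subst this
    refine ⟨[], by simp, rfl, ?_⟩
    funext i
    rw [h3 i]
    · rfl
    · rintro ⟨l, h, h', _⟩
      simp at h'; omega
  | succ n ih =>
    intro w f hn h0 h1 h2 h3
    cases w with
    | nil => exact ih [] f (by simp) h0 h1 h2 h3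
    | cons b v =>
    cases b with
    | true => simp at h0
    | false =>
    obtain ⟨l, w', rfl, hw'⟩ := wd_split v
    rw [← List.cons_append] at *
    have sh := wd_run_shift l w' hw'
    obtain ⟨L, hL, hLw, hLf⟩ := ih w' (fun i => f (i + (l + 1))) (by simp at hn; omega) hw'
      (fun i m h => h1 _ m ((sh i m).2 h)) (fun i m h => h2 _ m ((sh i m).2 h))
      (fun i h => h3 _ (fun ⟨m, hm⟩ => h ⟨m, (sh i m).1 hm⟩))
    refine ⟨⟨l, if l = 0 then 0 else f 1⟩ :: L, ?_, ?_, ?_⟩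
    · intro x hx
      rcases List.mem_cons.1 hx with rfl | hx
      · unfold wdA
        rw [Finset.mem_sigma]
        by_cases hl : l = 0
        · subst hl; simp
        · have hr := wd_run_first l w' hw' (by omega)
          have a := h1 _ _ hr
          have b := h2 _ _ hr
          simp only [Set.mem_insert_iff, Set.mem_singleton_iff] at a
          simp only [if_neg hl]
          exact ⟨by simp; tauto, b⟩
      · exact hL x hx
    · simp [wdWord, hLw]
    · funext i
      simp only [wdFun, hLf]
      split_ifs with ha hb hc
      · omega
      · subst hb; rfl
      · symm
        apply h3
        rintro ⟨m, hm⟩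
        exact hb (wd_run_lo l w' i m ha hm)
      · congr 1; omega

lemma wd_count (L : List (Σ _ : ℕ, ℕ)) : (wdWord L).count false = L.length ∧
    (wdWord L).count true = (L.map (fun x => x.1)).sum := by
  induction L with
  | nil => simp [wdWord]
  | cons x L ih =>
    simp [wdWord, ih.1, ih.2, List.count_replicate]

lemma wd_card (weight : ℕ → ℕ) (t : ℕ) (u : ℝ) (hu : 0 < u) :
    (Set.ncard {p : List Bool × (ℕ → ℕ) |
                    IsDyckWord t p.1 ∧
                    (∀ i l : ℕ, MaxTrueRun p.1 i l → l ∈ ({2, 3, 4, 5, 14} : Set ℕ)) ∧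
                    (∀ i l : ℕ, MaxTrueRun p.1 i l → p.2 i ∈ Finset.Icc 1 (weight l)) ∧
                    (∀ i : ℕ, (¬ ∃ l : ℕ, MaxTrueRun p.1 i l) → p.2 i = 0)} : ℝ) * u ^ t ≤
      (1 + weight 2 * u ^ 2 + weight 3 * u ^ 3 + weight 4 * u ^ 4 + weight 5 * u ^ 5
        + weight 14 * u ^ 14) ^ t := by
  classical
  set S := {p : List Bool × (ℕ → ℕ) |
                    IsDyckWord t p.1 ∧
                    (∀ i l : ℕ, MaxTrueRun p.1 i l → l ∈ ({2, 3, 4, 5, 14} : Set ℕ)) ∧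
                    (∀ i l : ℕ, MaxTrueRun p.1 i l → p.2 i ∈ Finset.Icc 1 (weight l)) ∧
                    (∀ i : ℕ, (¬ ∃ l : ℕ, MaxTrueRun p.1 i l) → p.2 i = 0)} with hS
  set P := Fintype.piFinset (fun _ : Fin t => wdA weight) with hP
  set B := P.filter (fun v => ∑ j, (v j).1 = t) with hB
  have hsub : S ⊆ ((B.image (fun v => (wdWord (List.ofFn v), wdFun (List.ofFn v))) :
      Finset (List Bool × (ℕ → ℕ))) : Set (List Bool × (ℕ → ℕ))) := by
    rintro ⟨w, f⟩ ⟨⟨hf, ht, hpre⟩, h1, h2, h3⟩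
    simp only at hf ht hpre h1 h2 h3
    have h0 : w[0]? ≠ some true := by
      intro h
      cases w with
      | nil => simp at h
      | cons b w =>
        simp at h
        subst h
        have := hpre [true] ⟨w, rfl⟩
        simp at this
    obtain ⟨L, hL, rfl, rfl⟩ := wd_exists weight _ w f le_rfl h0 h1 h2 h3
    rw [(wd_count L).1] at hf
    rw [(wd_count L).2] at ht
    subst hf
    simp only [Finset.coe_image, Set.mem_image, Finset.mem_coe]
    refine ⟨fun j => L.get j, ?_, ?_⟩
    · rw [hB, Finset.mem_filter, hP, Fintype.mem_piFinset]
      refine ⟨fun j => hL _ (List.get_mem L j), ?_⟩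
      rw [← List.sum_ofFn]
      have e : List.ofFn (fun j => (L.get j).1) = L.map (fun x => x.1) := by
        apply List.ext_get <;> simp
      rw [e]
      exact ht
    · rw [List.ofFn_get]
  have hc : S.ncard ≤ B.card := by
    refine (Set.ncard_le_ncard hsub (Finset.finite_toSet _)).trans ?_
    rw [Set.ncard_coe_finset]
    exact Finset.card_image_le
  calc (S.ncard : ℝ) * u ^ t ≤ B.card * u ^ t := by gcongr
    _ = ∑ v ∈ B, ∏ j, u ^ (v j).1 := by
        rw [Finset.sum_congr rfl (g := fun _ => u ^ t), Finset.sum_const, nsmul_eq_mul]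
        intro v hv
        rw [Finset.prod_pow_eq_pow_sum, (Finset.mem_filter.1 hv).2]
    _ ≤ ∑ v ∈ P, ∏ j, u ^ (v j).1 :=
        Finset.sum_le_sum_of_subset_of_nonneg (Finset.filter_subset _ _)
          (fun _ _ _ => Finset.prod_nonneg fun _ _ => by positivity)
    _ = ∏ _j : Fin t, ∑ x ∈ wdA weight, u ^ x.1 := by
        rw [Finset.prod_univ_sum]
    _ = _ := by
        rw [Finset.prod_const, Finset.card_univ, Fintype.card_fin]
        congr 1
        unfold wdA
        rw [Finset.sum_sigma]
        simp
        ring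

lemma wd_main (Δ d : ℕ) (hd : 1000000000 ≤ d) (hΔ : (Δ : ℝ) ≤ 401 / 200 * d) :
    ∃ u : ℝ, 0 < u ∧
      1 + ((15 * d ^ 3 : ℕ) : ℝ) * u ^ 2 + ((2 ^ 7 * Δ ^ 3 * Nat.choose d 2 : ℕ) : ℝ) * u ^ 3
        + ((2 ^ 12 * Δ ^ 4 * d * Nat.choose d 2 : ℕ) : ℝ) * u ^ 4
        + ((2 ^ 11 * Δ ^ 4 * d ^ 2 * Nat.choose d 2 : ℕ) : ℝ) * u ^ 5
        + ((Nat.choose Δ 13 * d ^ 15 : ℕ) : ℝ) * u ^ 14 <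
      ((Nat.choose (d - 13) 2 : ℝ) - 3 * (d : ℝ)) * u := by
  have hdR : (1000000000 : ℝ) ≤ d := by exact_mod_cast hd
  have hd0 : (0 : ℝ) < d := by linarith
  have hc2 : (Nat.choose d 2 : ℝ) ≤ d ^ 2 / 2 := by
    rw [Nat.cast_choose_two]; nlinarith
  have hc13 : (Nat.choose Δ 13 : ℝ) ≤ (401 / 200 * d) ^ 13 / 6227020800 := by
    have h := Nat.choose_le_pow_div (α := ℝ) 13 Δ
    have e : ((Nat.factorial 13 : ℕ) : ℝ) = 6227020800 := by norm_num [Nat.factorial]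
    rw [e] at h
    refine h.trans ?_
    gcongr
  have hs : (d : ℝ) ^ 2 / 2 - 14 * d ≤ (Nat.choose (d - 13) 2 : ℝ) := by
    rw [Nat.cast_choose_two, Nat.cast_sub (by omega)]
    push_cast
    nlinarith
  set D : ℝ := (d : ℝ)
  set y : ℝ := 1 / D with hy
  have hDy : D * y = 1 := by rw [hy]; field_simp
  have hy0 : 0 < y := by positivity
  have hy1 : y ≤ 1 / 1000000000 := by rw [hy]; gcongr
  refine ⟨11 / 5 * y ^ 2, by positivity, ?_⟩
  push_cast
  have t2 : (15 * D ^ 3) * (11 / 5 * y ^ 2) ^ 2 = 15 * (11 / 5) ^ 2 * y := by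
    calc _ = 15 * (11 / 5) ^ 2 * y * (D * y) ^ 3 := by ring
      _ = _ := by rw [hDy]; ring
  have t3 : (2 ^ 7 * (Δ : ℝ) ^ 3 * (Nat.choose d 2 : ℝ)) * (11 / 5 * y ^ 2) ^ 3 ≤ 10000 * y := by
    calc _ ≤ (2 ^ 7 * (401 / 200 * D) ^ 3 * (D ^ 2 / 2)) * (11 / 5 * y ^ 2) ^ 3 := by gcongr
      _ = (2 ^ 7 * (401 / 200) ^ 3 / 2 * (11 / 5) ^ 3) * y * (D * y) ^ 5 := by ring
      _ ≤ _ := by rw [hDy, one_pow, mul_one]; gcongr; norm_num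
  have t4 : (2 ^ 12 * (Δ : ℝ) ^ 4 * D * (Nat.choose d 2 : ℝ)) * (11 / 5 * y ^ 2) ^ 4
      ≤ 1000000 * y := by
    calc _ ≤ (2 ^ 12 * (401 / 200 * D) ^ 4 * D * (D ^ 2 / 2)) * (11 / 5 * y ^ 2) ^ 4 := by gcongr
      _ = (2 ^ 12 * (401 / 200) ^ 4 / 2 * (11 / 5) ^ 4) * y * (D * y) ^ 7 := by ring
      _ ≤ _ := by rw [hDy, one_pow, mul_one]; gcongr; norm_num
  have t5 : (2 ^ 11 * (Δ : ℝ) ^ 4 * D ^ 2 * (Nat.choose d 2 : ℝ)) * (11 / 5 * y ^ 2) ^ 5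
      ≤ 1000000 * y := by
    calc _ ≤ (2 ^ 11 * (401 / 200 * D) ^ 4 * D ^ 2 * (D ^ 2 / 2)) * (11 / 5 * y ^ 2) ^ 5 := by
          gcongr
      _ = (2 ^ 11 * (401 / 200) ^ 4 / 2 * (11 / 5) ^ 5 * y) * y * (D * y) ^ 8 := by ring
      _ ≤ _ := by
        rw [hDy, one_pow, mul_one]; gcongr
        have : y ≤ 1 := by linarith
        linarith
  have t14 : ((Nat.choose Δ 13 : ℝ) * D ^ 15) * (11 / 5 * y ^ 2) ^ 14 ≤ 9 / 100 := by
    calc _ ≤ ((401 / 200 * D) ^ 13 / 6227020800 * D ^ 15) * (11 / 5 * y ^ 2) ^ 14 := by gcongr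
      _ = ((401 / 200) ^ 13 / 6227020800 * (11 / 5) ^ 14) * (D * y) ^ 28 := by ring
      _ ≤ _ := by rw [hDy]; norm_num
  have ts : 11 / 10 - 40 * y ≤ ((Nat.choose (d - 13) 2 : ℝ) - 3 * D) * (11 / 5 * y ^ 2) := by
    calc (11 / 10 - 40 * y : ℝ) ≤ 11 / 10 * (D * y) ^ 2 - 17 * 11 / 5 * y * (D * y) := by
          rw [hDy]; linarith
      _ = ((D ^ 2 / 2 - 14 * D) - 3 * D) * (11 / 5 * y ^ 2) := by ring
      _ ≤ _ := by gcongr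
  linarith

/-- For every sufficiently small `ε > 0` there is `Δ₀` such that for every `Δ ≥ Δ₀`, with
`d := ⌈(1/2 - ε)Δ⌉` and `s := C(d-13, 2) - 3d`, the number `C_t` of weighted Dyck words of
semilength `t` with descent lengths in `{2, 3, 4, 5, 14}`, each descent of length
`2, 3, 4, 5, 14` carrying a weight in `{1, …, w₂}, {1, …, w₃}, {1, …, w₄}, {1, …, w₅},
{1, …, w₁}` respectively (descents are identified with their starting positions, weights are
`0` elsewhere), satisfies `C_t / s^t → 0` as `t → ∞`. -/
theorem weighted_dyck_count_little_o :
    ∃ ε₀ : ℝ, 0 < ε₀ ∧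
      ∀ ε : ℝ, 0 < ε → ε < ε₀ →
        ∃ Δ₀ : ℕ, ∀ Δ : ℕ, Δ₀ ≤ Δ →
          ∀ d : ℕ, d = ⌈((1 : ℝ)/2 - ε) * (Δ : ℝ)⌉₊ →
            ∀ weight : ℕ → ℕ,
              weight 2 = 15 * d ^ 3 →
              weight 3 = 2 ^ 7 * Δ ^ 3 * Nat.choose d 2 →
              weight 4 = 2 ^ 12 * Δ ^ 4 * d * Nat.choose d 2 →
              weight 5 = 2 ^ 11 * Δ ^ 4 * d ^ 2 * Nat.choose d 2 →
              weight 14 = Nat.choose Δ 13 * d ^ 15 →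
              ∀ C : ℕ → ℕ,
                (∀ t : ℕ, C t = Set.ncard {p : List Bool × (ℕ → ℕ) |
                    IsDyckWord t p.1 ∧
                    (∀ i l : ℕ, MaxTrueRun p.1 i l → l ∈ ({2, 3, 4, 5, 14} : Set ℕ)) ∧
                    (∀ i l : ℕ, MaxTrueRun p.1 i l → p.2 i ∈ Finset.Icc 1 (weight l)) ∧
                    (∀ i : ℕ, (¬ ∃ l : ℕ, MaxTrueRun p.1 i l) → p.2 i = 0)}) →
                Filter.Tendsto
                  (fun t : ℕ => (C t : ℝ) /
                    ((Nat.choose (d - 13) 2 : ℝ) - 3 * (d : ℝ)) ^ t)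
                  Filter.atTop (nhds 0) := by
  refine ⟨1 / 1000, by norm_num, ?_⟩
  intro ε hε0 hε
  refine ⟨3000000000, ?_⟩
  intro Δ hΔ d hd weight e2 e3 e4 e5 e14 C hC
  have hΔR : (3000000000 : ℝ) ≤ Δ := by exact_mod_cast hΔ
  have hle : ((1 : ℝ) / 2 - ε) * Δ ≤ d := by rw [hd]; exact Nat.le_ceil _
  have hle2 : (499 / 1000 : ℝ) * Δ ≤ d := by
    refine le_trans ?_ hle
    gcongr
    linarith
  have hd1 : 1000000000 ≤ d := by
    have : (1000000000 : ℝ) ≤ d := by linarith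
    exact_mod_cast this
  obtain ⟨u, hu, hlt⟩ := wd_main Δ d hd1 (by linarith)
  rw [← e2, ← e3, ← e4, ← e5, ← e14] at hlt
  set s : ℝ := (Nat.choose (d - 13) 2 : ℝ) - 3 * (d : ℝ)
  set φ : ℝ := 1 + (weight 2 : ℝ) * u ^ 2 + weight 3 * u ^ 3 + weight 4 * u ^ 4
    + weight 5 * u ^ 5 + weight 14 * u ^ 14 with hφ
  have hφ0 : 0 < φ := by rw [hφ]; positivity
  have hsu : 0 < s * u := hφ0.trans hlt
  have hs : 0 < s := pos_of_mul_pos_left hsu hu.le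
  refine squeeze_zero (g := fun t => (φ / (s * u)) ^ t) (fun t => by positivity) ?_
    (tendsto_pow_atTop_nhds_zero_of_lt_one (by positivity) ((div_lt_one hsu).2 hlt))
  intro t
  have h := wd_card weight t u hu
  rw [← hC t] at h
  rw [div_pow, mul_pow, div_le_div_iff₀ (by positivity) (by positivity)]
  calc (C t : ℝ) * (s ^ t * u ^ t) = (C t * u ^ t) * s ^ t := by ring
    _ ≤ φ ^ t * s ^ t := by gcongr
end
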